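/- arXiv:1608.02009 — 2 statements merged into one kernel-verified Lean document; each statement's English description precedes it below -/
import Mathlib

section
/- Let n ≥ 1 and let f : ℝⁿ → ℝⁿ be a homeomorphism that is η-quasisymmetric for some homeomorphism η : [0,∞) → [0,∞). For z ∈ ℝⁿ and t > 0 set L_f(z,t) = sup{ |f(z)−f(w)| : |z−w| ≤ t }. Then there exists a constant C depending only on η such that for every z ∈ ℝⁿ, every r > 0 and every j ∈ ℤ, the number of integers k ∈ ℤ with L_f(z, 2^{−k} r) ∈ [ 2^{−j−1} L_f(z,r), 2^{−j} L_f(z,r) ) is at most C. -/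
/-!
The `η`-quasisymmetry inequality at `z` compares `L_f(z,s)` with `L_f(z,t)`: testing against a
point `b` with `|z - b| = t` gives `L_f(z,s) ≤ η(s/t) L_f(z,t)` (`Lf_le_eta_mul`). Since
`η(0) = 0` and `η` is continuous, some `m` depending only on `η` satisfies `η(2^{-m}) ≤ 1/2`, so
shrinking the radius by a factor of at least `2^m` at least halves `L_f`. Two radii whose values
of `L_f` lie in the same half-open dyadic band therefore have exponents differing by less than
`m`, and the band contains at most `2m + 1` of the scales.
-/

open MeasureTheory Metric Filter Set ENNReal NNReal

noncomputable section

/-- Points of `ℝⁿ`. -/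
abbrev Pt (n : ℕ) := EuclideanSpace ℝ (Fin n)

/-- The axis-parallel closed cube with lower corner `c` and edge length `r`. -/
def closedCube {n : ℕ} (c : Pt n) (r : ℝ) : Set (Pt n) :=
  {x | ∀ i, c i ≤ x i ∧ x i ≤ c i + r}

/-- `Ncov r E`: the minimal number of axis-parallel closed cubes of edge length `r`
needed to cover `E` (junk value `0` if no finite cover exists). -/
def Ncov {n : ℕ} (r : ℝ) (E : Set (Pt n)) : ℕ :=
  sInf {m : ℕ | ∃ s : Finset (Pt n), s.card = m ∧ E ⊆ ⋃ c ∈ s, closedCube c r}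

/-- Upper Minkowski dimension (intended for bounded sets). -/
def dimM {n : ℕ} (F : Set (Pt n)) : ℝ :=
  limsup (fun r : ℝ => Real.log (Ncov r F) / Real.log (1 / r)) (nhdsWithin 0 (Ioi 0))

/-- The set of ratios `log N_cov(r, E ∩ B) / log (r_B / r)` over balls `B = B(x, r_B)`
with `N * r ≤ r_B ≤ R`. -/
def locRatios {n : ℕ} (E : Set (Pt n)) (N r R : ℝ) : Set ℝ :=
  {d | ∃ (x : Pt n) (rB : ℝ), 0 < rB ∧ N * r ≤ rB ∧ rB ≤ R ∧
        d = Real.log (Ncov r (E ∩ ball x rB)) / Real.log (rB / r)}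

/-- The local self-similar Minkowski dimension. -/
def dimLoc {n : ℕ} (E : Set (Pt n)) : ℝ :=
  liminf (fun N : ℝ =>
    limsup (fun r : ℝ => sSup (locRatios E N r 1)) (nhdsWithin 0 (Ioi 0))) atTop

/-- The global self-similar Minkowski dimension. -/
def dimGlob {n : ℕ} (E : Set (Pt n)) : ℝ :=
  liminf (fun N : ℝ =>
    sSup {d : ℝ | ∃ r : ℝ, 0 < r ∧ ∃ (x : Pt n) (rB : ℝ), 0 < rB ∧ N * r ≤ rB ∧
      d = Real.log (Ncov r (E ∩ ball x rB)) / Real.log (rB / r)}) atTop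

/-- The `Q_α`-energy `Φ_α(u, B(x₀,r)) = |B|^{2α/n-1} ∬_{B×B} |u(x)-u(y)|²/|x-y|^{n+2α}`. -/
def Phi {n : ℕ} (α : ℝ) (u : Pt n → ℝ) (x₀ : Pt n) (r : ℝ) : ℝ≥0∞ :=
  (volume (ball x₀ r)) ^ (2 * α / (n : ℝ) - 1) *
    ∫⁻ x in ball x₀ r, ∫⁻ y in ball x₀ r,
      ENNReal.ofReal (|u x - u y| ^ 2 / ‖x - y‖ ^ ((n : ℝ) + 2 * α))

/-- The `Q_α`-norm of `u`. -/
def Qnorm {n : ℕ} (α : ℝ) (u : Pt n → ℝ) : ℝ≥0∞ :=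
  ⨆ (x₀ : Pt n) (r : ℝ) (_ : 0 < r),
    (ENNReal.ofReal (r ^ (2 * α - (n : ℝ))) *
      ∫⁻ x in ball x₀ r, ∫⁻ y in ball x₀ r,
        ENNReal.ofReal (|u x - u y| ^ 2 / ‖x - y‖ ^ ((n : ℝ) + 2 * α))) ^ (1/2 : ℝ)

/-- Membership in `Q_α(ℝⁿ)`: `u ∈ L²_loc` and the `Q_α`-norm is finite. -/
def MemQ {n : ℕ} (α : ℝ) (u : Pt n → ℝ) : Prop :=
  LocallyIntegrable (fun x => |u x| ^ 2) volume ∧ Qnorm α u < ⊤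

/-- `Ψ_{α,q}(u, B(x₀,r))`. -/
def Psi {n : ℕ} (α q : ℝ) (u : Pt n → ℝ) (x₀ : Pt n) (r : ℝ) : ℝ≥0∞ :=
  ∑' k : ℕ, ENNReal.ofReal ((2:ℝ) ^ (2 * (k:ℝ) * α)) *
    ((volume (ball x₀ r))⁻¹ * ∫⁻ x in ball x₀ r,
      ⨅ c : ℝ, ((volume (ball x ((2:ℝ) ^ (-(k:ℝ)) * r)))⁻¹ *
        ∫⁻ z in ball x ((2:ℝ) ^ (-(k:ℝ)) * r), ENNReal.ofReal (|u z - c| ^ q)) ^ (2 / q))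

/-- The quantity `inf_c ( ⨍_{B(x,ρ)} |u - c|^σ )^{1/σ}`. -/
def oscAvg {n : ℕ} (σ : ℝ) (u : Pt n → ℝ) (x : Pt n) (ρ : ℝ) : ℝ≥0∞ :=
  ⨅ c : ℝ, ((volume (ball x ρ))⁻¹ *
    ∫⁻ w in ball x ρ, ENNReal.ofReal (|u w - c| ^ σ)) ^ (1/σ)

/-- `f` is `η`-quasisymmetric, where the homeomorphism `η` of `[0,∞)` is encoded as an
order isomorphism of `ℝ≥0`. -/
def IsQS {n : ℕ} (f : Pt n → Pt n) (η : ℝ≥0 ≃o ℝ≥0) : Prop :=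
  ∀ x a b : Pt n, x ≠ b →
    nndist (f x) (f a) ≤ η (nndist x a / nndist x b) * nndist (f x) (f b)

/-- The local Muckenhoupt class `A₁(ℝⁿ; S)`: the `A₁` condition holds on every ball
`B(x₀,r)` with `2r < dist(x₀, S)`. -/
def MemA1 {n : ℕ} (w : Pt n → ℝ) (S : Set (Pt n)) : Prop :=
  ∃ C > 0, ∀ (x₀ : Pt n) (r : ℝ), 0 < r →
    ENNReal.ofReal (2 * r) < EMetric.infEdist x₀ S →
    ⨍ x in ball x₀ r, w x ∂volume ≤ C * essInf w (volume.restrict (ball x₀ r))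

/-- `J` is the a.e. Jacobian of `f` (`J = |det Df|` a.e.) and the change-of-variables
formula holds for all nonnegative measurable integrands. -/
def JacobianCOV {n : ℕ} (f : Pt n → Pt n) (J : Pt n → ℝ) : Prop :=
  (∀ᵐ x ∂(volume : Measure (Pt n)), ∃ D : Pt n →L[ℝ] Pt n,
      HasFDerivAt f D x ∧ J x = |D.det|) ∧
  ∀ g : Pt n → ℝ≥0∞, Measurable g →
    ∫⁻ x, g (f x) * ENNReal.ofReal (J x) = ∫⁻ y, g y

/-- The hyperplane `ℝ^{n-1} × {0}` (the last coordinate vanishes). -/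
def Hset (n : ℕ) : Set (Pt n) := {x | ∀ i : Fin n, (i : ℕ) = n - 1 → x i = 0}

/-- The open upper half-space (last coordinate positive). -/
def upperHalf (n : ℕ) : Set (Pt n) := {x | ∀ i : Fin n, (i : ℕ) = n - 1 → 0 < x i}

/-- The open lower half-space (last coordinate negative). -/
def lowerHalf (n : ℕ) : Set (Pt n) := {x | ∀ i : Fin n, (i : ℕ) = n - 1 → x i < 0}

/-- The hyperbolic length `∫₀¹ |γ'(t)|/dist(γ(t),H) dt` of a curve `γ`. -/
def hypLen {n : ℕ} (H : Set (Pt n)) (γ : ℝ → Pt n) : ℝ :=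
  ∫ t in (0:ℝ)..1, ‖deriv γ t‖ / Metric.infDist (γ t) H

/-- The hyperbolic-type distance associated with the set `H`: the infimum of hyperbolic
lengths of differentiable curves joining `z` and `w` in the complement of `H`. -/
def hypDist {n : ℕ} (H : Set (Pt n)) (z w : Pt n) : ℝ :=
  sInf {L : ℝ | ∃ γ : ℝ → Pt n, γ 0 = z ∧ γ 1 = w ∧
    (∀ t ∈ Icc (0:ℝ) 1, DifferentiableAt ℝ γ t ∧ γ t ∉ H) ∧ L = hypLen H γ}

/-- `L_f(z,t) = sup { |f(z)-f(w)| : |z-w| ≤ t }`. -/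
def Lf {n : ℕ} (f : Pt n → Pt n) (z : Pt n) (t : ℝ) : ℝ :=
  sSup ((fun w => dist (f z) (f w)) '' closedBall z t)


/-- The supremum defining `L_f(z,t)` is over a bounded set, by compactness of the closed ball, so
each value is genuinely dominated by it. -/
theorem dist_le_Lf {n : ℕ} (f : Pt n ≃ₜ Pt n) (z w : Pt n) (t : ℝ) (hw : dist z w ≤ t) :
    dist (f z) (f w) ≤ Lf (⇑f) z t := by
  refine le_csSup ?_ ⟨w, by rwa [mem_closedBall, dist_comm], rfl⟩
  have hc : Continuous fun w => dist (f z) (f w) := continuous_const.dist f.continuous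
  exact ((isCompact_closedBall z t).image hc).bddAbove

theorem Lf_le_eta_mul {n : ℕ} (hn : 1 ≤ n) {η : ℝ≥0 ≃o ℝ≥0} (f : Pt n ≃ₜ Pt n)
    (hf : IsQS (⇑f) η) (z : Pt n) {s t : ℝ} (hs : 0 ≤ s) (ht : 0 < t) {q : ℝ≥0}
    (hst : s ≤ q * t) :
    Lf (⇑f) z s ≤ η q * Lf (⇑f) z t := by
  have : Nonempty (Fin n) := ⟨⟨0, hn⟩⟩
  -- positive dimension provides a point at distance exactly `t` from `z`
  obtain ⟨b, hb⟩ := (NormedSpace.sphere_nonempty (x := z) (r := t)).2 ht.le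
  have hzb : dist z b = t := by rw [dist_comm]; exact hb
  have hne : z ≠ b := by
    rintro rfl
    rw [dist_self] at hzb
    exact ht.ne hzb
  refine csSup_le ((nonempty_closedBall.2 hs).image _) ?_
  rintro _ ⟨w, hw, rfl⟩
  rw [mem_closedBall, dist_comm] at hw
  have hq : nndist z w / nndist z b ≤ q := by
    rw [← NNReal.coe_le_coe, NNReal.coe_div, coe_nndist, coe_nndist, hzb, div_le_iff₀ ht]
    exact hw.trans hst
  have h1 : dist (f z) (f w) ≤ η (nndist z w / nndist z b) * dist (f z) (f b) := by
    exact_mod_cast hf z w b hne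
  have h2 : ((η (nndist z w / nndist z b) : ℝ≥0) : ℝ) ≤ η q := by
    exact_mod_cast η.monotone hq
  exact h1.trans (mul_le_mul h2 (dist_le_Lf f z b t hzb.le) dist_nonneg (η q).coe_nonneg)

/-- for a quasisymmetric homeomorphism `f`, at most a bounded number
(depending only on `η`) of the scales `L_f(z, 2^{-k} r)`, `k ∈ ℤ`, can lie in any fixed
dyadic band `[2^{-j-1} L_f(z,r), 2^{-j} L_f(z,r))`. -/
theorem scales_in_dyadic_band_bounded (n : ℕ) (hn : 1 ≤ n) (η : ℝ≥0 ≃o ℝ≥0) :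
    ∃ C : ℕ, ∀ f : Pt n ≃ₜ Pt n, IsQS (⇑f) η →
      ∀ (z : Pt n) (r : ℝ), 0 < r → ∀ j : ℤ,
        ({k : ℤ | Lf (⇑f) z ((2:ℝ) ^ (-k) * r) ∈
            Ico ((2:ℝ) ^ (-j - 1) * Lf (⇑f) z r) ((2:ℝ) ^ (-j) * Lf (⇑f) z r)}).Finite ∧
        ({k : ℤ | Lf (⇑f) z ((2:ℝ) ^ (-k) * r) ∈
            Ico ((2:ℝ) ^ (-j - 1) * Lf (⇑f) z r) ((2:ℝ) ^ (-j) * Lf (⇑f) z r)}).ncard ≤ C := by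
  obtain ⟨m, hm⟩ : ∃ m : ℕ, η ((1 / 2 : ℝ≥0) ^ m) ≤ 1 / 2 := by
    have hpos : 0 < η.symm (1 / 2) := by
      have h := η.symm.strictMono (show (0 : ℝ≥0) < 1 / 2 by positivity)
      exact lt_of_le_of_lt zero_le h
    obtain ⟨m, hm⟩ := _root_.exists_pow_lt_of_lt_one hpos
      (show (1 / 2 : ℝ≥0) < 1 from NNReal.half_lt_self one_ne_zero)
    exact ⟨m, by simpa using η.monotone hm.le⟩
  refine ⟨2 * m + 1, fun f hf z r hr j => ?_⟩
  set S : Set ℤ := {k : ℤ | Lf (⇑f) z ((2:ℝ) ^ (-k) * r) ∈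
    Ico ((2:ℝ) ^ (-j - 1) * Lf (⇑f) z r) ((2:ℝ) ^ (-j) * Lf (⇑f) z r)} with hS
  have key : ∀ k ∈ S, ∀ l ∈ S, l < k + m := by
    intro k hk l hl
    by_contra! hkl
    have hscale : (2:ℝ) ^ (-l) * r ≤ (((1 / 2 : ℝ≥0) ^ m : ℝ≥0) : ℝ) * ((2:ℝ) ^ (-k) * r) := by
      have e : (((1 / 2 : ℝ≥0) ^ m : ℝ≥0) : ℝ) = (2:ℝ) ^ (-(m:ℤ)) := by
        simp [zpow_neg]
      rw [e, ← mul_assoc, ← zpow_add₀ two_ne_zero]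
      gcongr
      · norm_num
      · linarith
    have h1 := Lf_le_eta_mul hn f hf z (by positivity) (by positivity) hscale
    have h2 : ((η ((1 / 2 : ℝ≥0) ^ m) : ℝ≥0) : ℝ) ≤ 1 / 2 := by
      exact_mod_cast hm
    have h0 : 0 ≤ Lf (⇑f) z ((2:ℝ) ^ (-k) * r) :=
      dist_nonneg.trans (dist_le_Lf f z z _ (by rw [dist_self]; positivity))
    have h3 := mul_le_mul_of_nonneg_right h2 h0
    have h4 := hl.1
    have h5 := hk.2
    rw [zpow_sub_one₀ two_ne_zero] at h4
    linarith
  rcases S.eq_empty_or_nonempty with hE | ⟨k₀, hk₀⟩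
  · simp [hE]
  have hsub : S ⊆ ↑(Finset.Icc (k₀ - m) (k₀ + m)) := by
    intro k hk
    have h1 := key k hk k₀ hk₀
    have h2 := key k₀ hk₀ k hk
    rw [Finset.coe_Icc]
    constructor <;> linarith
  refine ⟨(Finset.finite_toSet _).subset hsub, ?_⟩
  refine (Set.ncard_le_ncard hsub (Finset.finite_toSet _)).trans ?_
  rw [Set.ncard_coe_finset, Int.card_Icc]
  lia

end
end

section
/- Let n ≥ 2 and α₀ ∈ (0,1). There exist a bounded set E ⊂ ℝⁿ with dim_L E = n − 2α₀ and a homeomorphism f : ℝⁿ → ℝⁿ which is Lipschitz, η-quasisymmetric for some homeomorphism η : [0,∞) → [0,∞), differentiable almost everywhere with Jacobian J_f = |det Df| satisfying the change-of-variables formula ∫ g(f(x)) J_f(x) dx = ∫ g(y) dy for every nonnegative measurable g, and with J_f ∈ A_1(ℝⁿ; closure of E), such that for every α ∈ (α₀, 1) the composition operator u ↦ u∘f is unbounded on Q_α(ℝⁿ): for every constant C > 0 there exists u ∈ Q_α(ℝⁿ) with ‖u∘f‖_{Q_α} > C ‖u‖_{Q_α} and 0 < ‖u‖_{Q_α} <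 ∞. -/
/-!
The set `E` is the set of all midpoints of the intervals of a self-similar Cantor construction,
taken coordinatewise: `grid k` is the product grid of midpoints of generation at most `k`, and
`E = gridSet` is the union of these finite grids. The contraction ratio `l` satisfies
`l ^ (n - 2α₀) = 2 ^ (-n)`. Points of generation `k` are separated by a multiple of `l ^ k` and a
cube of edge `L ≥ l ^ k` contains at most about `(L / l ^ k) ^ (n - 2α₀)` of them, so that
`dim_L E = n - 2α₀` (`Par.dimLoc_gridSet`).

The homeomorphism `f` is the identity outside disjoint balls `B(p, ε)`, one for every `p ∈ E`, with
`ε` comparable with `l ^ k` when `p` has generation `k`. Inside such a ball it is the radial stretch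
`p + v ↦ p + (|v| / ε) v`. Up to bounded factors, `|f x - f y|` equals
`|x - y|` times a gauge, which is `min 1 ((|x - p| + |x - y|) / ε)` if `x` is in `B(p, ε)` and `1` if
`x` is outside all balls (`SepFamily.gauge_bounds`). This yields the Lipschitz and quasisymmetry bounds, and it also
shows that the Jacobian is comparable with a constant on balls away from `E`, whence the `A₁`
condition. Rademacher's theorem and the area formula give the change of variables.

For `α > α₀` put `β = n - 2α` and let `u` be the tent function of height one and radius `s` around
`grid k`, where `s ^ β = 2 ^ (-nk)`. The packing estimate bounds its `Q_α`-norm independently of `k`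
(`Qnorm_tent_le`, `Par.packing`). Composition with `f` widens each spike at a point of generation
exactly `k` to radius `√(s ε)`, so the energy of `u ∘ f` on `B(0,2)` is at least a constant times
`2 ^ (nk) (s ε) ^ (β / 2)` (`energy_ge`, `Par.energy_comp_ge`). This is a multiple of
`l ^ (-k (α - α₀))`, which is unbounded in `k`.
-/

open MeasureTheory Metric Filter Set ENNReal NNReal

noncomputable section

/-! ### Radial stretches -/

/-- The radial stretch about `p` of radius `e`: the identity outside `B(p,e)`, and
`p + v ↦ p + (‖v‖ / e) v` inside. -/
def stretch {n : ℕ} (p : Pt n) (e : ℝ) (x : Pt n) : Pt n :=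
  p + min 1 (‖x - p‖ / e) • (x - p)

/-- The scalar inequality behind the upper bound in `stretch_upper`: with `a = min 1 (X / e)` and
`b = min 1 (Y / e)`, the variation `|a - b|` is controlled by `a + b` and `|X - Y|`. -/
lemma min_diff_mul_le {e X Y : ℝ} (he : 0 < e) (hX : 0 ≤ X) (hXY : X ≤ Y) :
    (min 1 (Y / e) - min 1 (X / e)) * (X + Y)
      ≤ (min 1 (X / e) + min 1 (Y / e)) * (Y - X) := by
  have hY : 0 ≤ Y := hX.trans hXY
  rcases le_total 1 (X / e) with h1 | h1
  · have h2 : 1 ≤ Y / e := h1.trans (by gcongr)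
    rw [min_eq_left h1, min_eq_left h2]
    linarith
  · rw [min_eq_right h1]
    rcases le_total 1 (Y / e) with h2 | h2
    · rw [min_eq_left h2]
      have e1 : X = (X / e) * e := by field_simp
      have e2 : Y = (Y / e) * e := by field_simp
      set a := X / e
      set b := Y / e
      have ha : 0 ≤ a := by positivity
      rw [e1, e2]
      nlinarith [mul_nonneg (mul_nonneg ha (sub_nonneg.2 h2)) he.le]
    · rw [min_eq_right h2]
      apply le_of_eq
      field_simp

lemma stretch_upper {n : ℕ} (p : Pt n) {e : ℝ} (he : 0 < e) (x y : Pt n) :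
    ‖stretch p e x - stretch p e y‖
      ≤ (min 1 (‖x - p‖ / e) + min 1 (‖y - p‖ / e)) * ‖x - y‖ := by
  wlog h : ‖x - p‖ ≤ ‖y - p‖ generalizing x y
  · have := this y x (le_of_not_ge h)
    rw [norm_sub_rev (stretch p e x), norm_sub_rev x y, add_comm (min 1 (‖x - p‖ / e))]
    exact this
  have key := min_diff_mul_le he (norm_nonneg (x - p)) h
  have hab : min 1 (‖x - p‖ / e) ≤ min 1 (‖y - p‖ / e) := by gcongr
  have ha0 : 0 ≤ min 1 (‖x - p‖ / e) := by positivity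
  unfold stretch
  set a := min 1 (‖x - p‖ / e)
  set b := min 1 (‖y - p‖ / e)
  have hid : p + a • (x - p) - (p + b • (y - p))
      = ((a + b) / 2) • (x - y) + ((a - b) / 2) • ((x - p) + (y - p)) := by module
  rw [hid]
  have h1 : ‖((a + b) / 2) • (x - y)‖ = (a + b) / 2 * ‖x - y‖ := by
    rw [norm_smul, Real.norm_of_nonneg (by linarith)]
  have h2 : ‖((a - b) / 2) • ((x - p) + (y - p))‖ ≤ (b - a) / 2 * (‖x - p‖ + ‖y - p‖) := by
    rw [norm_smul, Real.norm_of_nonpos (by linarith)]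
    have := norm_add_le (x - p) (y - p)
    nlinarith
  have h3 : ‖y - p‖ - ‖x - p‖ ≤ ‖x - y‖ := by
    have := norm_sub_norm_le (y - p) (x - p)
    rwa [sub_sub_sub_cancel_right, norm_sub_rev y x] at this
  have h4 : (a + b) * (‖y - p‖ - ‖x - p‖) ≤ (a + b) * ‖x - y‖ := by
    apply mul_le_mul_of_nonneg_left h3; linarith
  calc _ ≤ _ := norm_add_le _ _
    _ ≤ _ := by rw [h1]; linarith

lemma stretch_lower {n : ℕ} (p : Pt n) {e : ℝ} (he : 0 < e) (x y : Pt n) :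
    (min 1 (‖x - p‖ / e) + min 1 (‖y - p‖ / e)) / 2 * ‖x - y‖
      ≤ ‖stretch p e x - stretch p e y‖ := by
  rcases eq_or_lt_of_le (norm_nonneg (x - y)) with h0 | h0
  · rw [← h0]; simp
  -- the weight is monotone in the norm, so the second term of the inner product is nonnegative
  have hmono : 0 ≤ (min 1 (‖x - p‖ / e) - min 1 (‖y - p‖ / e)) * (‖x - p‖ ^ 2 - ‖y - p‖ ^ 2) := by
    rcases le_total ‖x - p‖ ‖y - p‖ with h | h
    · apply mul_nonneg_of_nonpos_of_nonpos
      · rw [sub_nonpos]; gcongr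
      · rw [sub_nonpos]; gcongr
    · apply mul_nonneg
      · rw [sub_nonneg]; gcongr
      · rw [sub_nonneg]; gcongr
  unfold stretch
  set a := min 1 (‖x - p‖ / e)
  set b := min 1 (‖y - p‖ / e)
  have hid : p + a • (x - p) - (p + b • (y - p))
      = ((a + b) / 2) • (x - y) + ((a - b) / 2) • ((x - p) + (y - p)) := by module
  have hin : inner ℝ (p + a • (x - p) - (p + b • (y - p))) (x - y)
      = (a + b) / 2 * ‖x - y‖ ^ 2 + (a - b) / 2 * (‖x - p‖ ^ 2 - ‖y - p‖ ^ 2) := by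
    rw [hid, inner_add_left, real_inner_smul_left, real_inner_smul_left,
      real_inner_self_eq_norm_sq]
    have : x - y = (x - p) - (y - p) := by abel
    have h5 : inner ℝ ((x - p) + (y - p)) (x - y) = ‖x - p‖ ^ 2 - ‖y - p‖ ^ 2 := by
      rw [this]
      generalize x - p = v
      generalize y - p = w
      rw [inner_add_left, inner_sub_right, inner_sub_right, real_inner_self_eq_norm_sq,
        real_inner_self_eq_norm_sq, real_inner_comm v w]
      ring
    rw [h5]
  have hcs := real_inner_le_norm (p + a • (x - p) - (p + b • (y - p))) (x - y)
  rw [hin] at hcs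
  nlinarith

/-! ### The map attached to a separated family of balls -/

/-- A set of centres, each with a radius in `(0,1]`, such that the balls of twice these radii are
pairwise disjoint. -/
structure SepFamily (n : ℕ) where
  /-- the centres -/
  S : Set (Pt n)
  /-- the radius attached to a centre -/
  rad : Pt n → ℝ
  pos : ∀ p ∈ S, 0 < rad p
  le_one : ∀ p ∈ S, rad p ≤ 1
  sep : ∀ p ∈ S, ∀ q ∈ S, p ≠ q → 2 * (rad p + rad q) ≤ dist p q

namespace SepFamily

variable {n : ℕ} (F : SepFamily n)

open Classical in
/-- The map that performs the radial stretch in each ball of the family and is the identity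
elsewhere. -/
def map (x : Pt n) : Pt n :=
  if h : ∃ p ∈ F.S, dist x p < F.rad p then stretch h.choose (F.rad h.choose) x else x

open Classical in
/-- The gauge of `F.map` at `x`: `‖F.map x - F.map y‖` is comparable to
`F.gauge x ‖x - y‖ * ‖x - y‖`. -/
def gauge (x : Pt n) (t : ℝ) : ℝ :=
  if h : ∃ p ∈ F.S, dist x p < F.rad p then
    min 1 ((dist x h.choose + t) / F.rad h.choose) else 1

variable {F}

lemma unique {x p q : Pt n} (hp : p ∈ F.S) (hq : q ∈ F.S) (hxp : dist x p < F.rad p)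
    (hxq : dist x q < F.rad q) : p = q := by
  by_contra h
  have h1 := F.sep p hp q hq h
  have h2 := dist_triangle_left p q x
  have := F.pos p hp
  have := F.pos q hq
  linarith

lemma map_of_mem {x p : Pt n} (hp : p ∈ F.S) (hxp : dist x p < F.rad p) :
    F.map x = stretch p (F.rad p) x := by
  have h : ∃ p ∈ F.S, dist x p < F.rad p := ⟨p, hp, hxp⟩
  rw [map, dif_pos h, unique hp h.choose_spec.1 hxp h.choose_spec.2]

lemma gauge_of_mem {x p : Pt n} (hp : p ∈ F.S) (hxp : dist x p < F.rad p) (t : ℝ) :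
    F.gauge x t = min 1 ((dist x p + t) / F.rad p) := by
  have h : ∃ p ∈ F.S, dist x p < F.rad p := ⟨p, hp, hxp⟩
  rw [gauge, dif_pos h, unique hp h.choose_spec.1 hxp h.choose_spec.2]

lemma map_of_not {x : Pt n} (h : ¬ ∃ p ∈ F.S, dist x p < F.rad p) : F.map x = x := by
  rw [map, dif_neg h]

lemma gauge_of_not {x : Pt n} (h : ¬ ∃ p ∈ F.S, dist x p < F.rad p) (t : ℝ) :
    F.gauge x t = 1 := by
  rw [gauge, dif_neg h]

lemma stretch_of_le {p x : Pt n} {e : ℝ} (he : 0 < e) (h : e ≤ dist x p) : stretch p e x = x := by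
  rw [dist_eq_norm] at h
  rw [stretch, min_eq_left ((one_le_div he).2 h)]
  simp

lemma map_eq_stretch {x p : Pt n} (hp : p ∈ F.S)
    (h : ∀ q ∈ F.S, q ≠ p → ¬ dist x q < F.rad q) : F.map x = stretch p (F.rad p) x := by
  by_cases hx : dist x p < F.rad p
  · exact map_of_mem hp hx
  · rw [stretch_of_le (F.pos p hp) (not_lt.1 hx)]
    apply map_of_not
    rintro ⟨q, hq, hxq⟩
    by_cases hqp : q = p
    · subst hqp; exact hx hxq
    · exact h q hq hqp hxq

lemma dist_map_self {x p : Pt n} (hp : p ∈ F.S) (hxp : dist x p < F.rad p) :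
    dist (F.map x) x ≤ F.rad p / 4 := by
  have hpos := F.pos p hp
  rw [map_of_mem hp hxp, dist_eq_norm, stretch]
  rw [dist_eq_norm] at hxp
  have h1 : ‖x - p‖ / F.rad p ≤ 1 := (div_le_one hpos).2 hxp.le
  rw [min_eq_right h1]
  have : p + (‖x - p‖ / F.rad p) • (x - p) - x = -((1 - ‖x - p‖ / F.rad p) • (x - p)) := by module
  rw [this, norm_neg, norm_smul, Real.norm_of_nonneg (by linarith)]
  have e1 : ‖x - p‖ = (‖x - p‖ / F.rad p) * F.rad p := by field_simp
  set a := ‖x - p‖ / F.rad p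
  rw [e1]
  nlinarith [sq_nonneg (a - 1/2), mul_nonneg hpos.le (sq_nonneg (a - 1/2))]

/-- Points in different balls are moved by little compared with their distance. -/
lemma dist_map_far {x y p q : Pt n} (hp : p ∈ F.S) (hq : q ∈ F.S) (hpq : p ≠ q)
    (hx : dist x p < F.rad p) (hy : dist y q < F.rad q) :
    F.rad p ≤ dist x y ∧ 3 / 4 * dist x y ≤ dist (F.map x) (F.map y) ∧
      dist (F.map x) (F.map y) ≤ 5 / 4 * dist x y := by
  have h1 := F.sep p hp q hq hpq
  have h2 : dist p q ≤ dist x p + dist x y + dist y q := by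
    have := dist_triangle4 p x y q
    rwa [dist_comm p x] at this
  have hx' := dist_map_self hp hx
  have hy' := dist_map_self hq hy
  have hpp := F.pos p hp
  have hqp := F.pos q hq
  have h3 := dist_triangle4 x (F.map x) (F.map y) y
  have h4 := dist_triangle4 (F.map x) x y (F.map y)
  rw [dist_comm x (F.map x)] at h3
  rw [dist_comm y (F.map y)] at h4
  refine ⟨by linarith, by linarith, by linarith⟩

/-- The two-sided metric estimate that carries all geometric properties of `F.map`. -/
lemma gauge_bounds (x y : Pt n) :
    F.gauge x (dist x y) * dist x y / 4 ≤ dist (F.map x) (F.map y) ∧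
      dist (F.map x) (F.map y) ≤ 2 * F.gauge x (dist x y) * dist x y := by
  have hd : 0 ≤ dist x y := dist_nonneg
  by_cases hx : ∃ p ∈ F.S, dist x p < F.rad p
  · obtain ⟨p, hp, hxp⟩ := hx
    have hpos := F.pos p hp
    rw [gauge_of_mem hp hxp]
    by_cases hy : ∃ q ∈ F.S, q ≠ p ∧ dist y q < F.rad q
    · obtain ⟨q, hq, hqp, hyq⟩ := hy
      obtain ⟨h1, h2, h3⟩ := dist_map_far hp hq hqp.symm hxp hyq
      rw [min_eq_left]
      · constructor <;> linarith
      · rw [one_le_div hpos]; linarith [dist_nonneg (x := x) (y := p)]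
    · push Not at hy
      rw [map_of_mem hp hxp, map_eq_stretch hp (fun q hq hqp => not_lt.2 (hy q hq hqp))]
      have hu := stretch_upper p hpos x y
      have hl := stretch_lower p hpos x y
      simp only [← dist_eq_norm] at hu hl
      have t1 : dist x y ≤ dist x p + dist y p := dist_triangle_right x y p
      have t2 : dist y p ≤ dist x p + dist x y := by
        have := dist_triangle_left y p x; linarith
      have c1 : min 1 (dist x p / F.rad p) + min 1 (dist y p / F.rad p)
          ≤ 2 * min 1 ((dist x p + dist x y) / F.rad p) := by
        have m1 : min 1 (dist x p / F.rad p) ≤ min 1 ((dist x p + dist x y) / F.rad p) := by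
          gcongr; linarith
        have m2 : min 1 (dist y p / F.rad p) ≤ min 1 ((dist x p + dist x y) / F.rad p) := by
          gcongr
        linarith
      have c2 : min 1 ((dist x p + dist x y) / F.rad p)
          ≤ 2 * (min 1 (dist x p / F.rad p) + min 1 (dist y p / F.rad p)) := by
        have n1 : 0 ≤ dist x p / F.rad p := by positivity
        have n2 : 0 ≤ dist y p / F.rad p := by positivity
        have n3 : (dist x p + dist x y) / F.rad p
            ≤ 2 * (dist x p / F.rad p) + 2 * (dist y p / F.rad p) := by
          rw [← mul_div_assoc, ← mul_div_assoc, ← add_div]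
          apply div_le_div_of_nonneg_right _ hpos.le
          linarith [dist_nonneg (x := y) (y := p)]
        rcases le_total 1 (dist x p / F.rad p) with h | h
        · rw [min_eq_left h]
          have := min_le_left 1 ((dist x p + dist x y) / F.rad p)
          have : 0 ≤ min 1 (dist y p / F.rad p) := by positivity
          linarith
        rcases le_total 1 (dist y p / F.rad p) with h' | h'
        · rw [min_eq_left h']
          have := min_le_left 1 ((dist x p + dist x y) / F.rad p)
          have : 0 ≤ min 1 (dist x p / F.rad p) := by positivity
          linarith
        · rw [min_eq_right h, min_eq_right h']
          have := min_le_right 1 ((dist x p + dist x y) / F.rad p)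
          linarith
      have c1' := mul_le_mul_of_nonneg_right c1 hd
      have c2' := mul_le_mul_of_nonneg_right c2 hd
      constructor <;> linarith
  · rw [gauge_of_not hx]
    by_cases hy : ∃ q ∈ F.S, dist y q < F.rad q
    · obtain ⟨q, hq, hyq⟩ := hy
      have hpos := F.pos q hq
      have hxq : F.rad q ≤ dist x q := by
        by_contra h; exact hx ⟨q, hq, not_le.1 h⟩
      have hu := stretch_upper q hpos x y
      have hl := stretch_lower q hpos x y
      rw [map_of_mem hq hyq, map_of_not hx]
      rw [stretch_of_le hpos hxq] at hu hl
      simp only [← dist_eq_norm] at hu hl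
      rw [min_eq_left ((one_le_div hpos).2 hxq)] at hu hl
      have h1 : min 1 (dist y q / F.rad q) ≤ 1 := min_le_left _ _
      have h2 : 0 ≤ min 1 (dist y q / F.rad q) := by positivity
      constructor <;> nlinarith
    · rw [map_of_not hx, map_of_not hy]
      constructor <;> linarith

lemma gauge_le_one (x : Pt n) (t : ℝ) : F.gauge x t ≤ 1 := by
  unfold gauge
  split_ifs
  · exact min_le_left _ _
  · exact le_rfl

lemma gauge_nonneg (x : Pt n) {t : ℝ} (ht : 0 ≤ t) : 0 ≤ F.gauge x t := by
  by_cases hx : ∃ p ∈ F.S, dist x p < F.rad p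
  · obtain ⟨p, hp, hxp⟩ := hx
    rw [gauge_of_mem hp hxp]
    have := F.pos p hp
    positivity
  · rw [gauge_of_not hx]; exact zero_le_one

lemma min_le_gauge (x : Pt n) {t : ℝ} (ht : 0 ≤ t) : min 1 t ≤ F.gauge x t := by
  by_cases hx : ∃ p ∈ F.S, dist x p < F.rad p
  · obtain ⟨p, hp, hxp⟩ := hx
    rw [gauge_of_mem hp hxp]
    have := F.pos p hp
    gcongr
    rw [le_div_iff₀ this]
    have := F.le_one p hp
    nlinarith [dist_nonneg (x := x) (y := p)]
  · rw [gauge_of_not hx]; exact min_le_left _ _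

/-- The gauge grows at most linearly. -/
lemma gauge_ratio (x : Pt n) {s t : ℝ} (hs : 0 ≤ s) (ht : 0 < t) :
    F.gauge x s ≤ (1 + s / t) * F.gauge x t := by
  have hst : 0 ≤ s / t := by positivity
  by_cases hx : ∃ p ∈ F.S, dist x p < F.rad p
  · obtain ⟨p, hp, hxp⟩ := hx
    rw [gauge_of_mem hp hxp, gauge_of_mem hp hxp]
    have := F.pos p hp
    rcases le_total 1 ((dist x p + t) / F.rad p) with h | h
    · rw [min_eq_left h]
      have := min_le_left 1 ((dist x p + s) / F.rad p)
      linarith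
    · rw [min_eq_right h]
      refine (min_le_right _ _).trans ?_
      rw [← mul_div_assoc]
      gcongr
      have e : s = s / t * t := by field_simp
      have := mul_nonneg hst (dist_nonneg (x := x) (y := p))
      nlinarith
  · rw [gauge_of_not hx, gauge_of_not hx]; linarith

lemma map_lipschitz : LipschitzWith 2 F.map := by
  apply LipschitzWith.of_dist_le_mul
  intro x y
  have h := (gauge_bounds (F := F) x y).2
  have h1 := F.gauge_le_one x (dist x y)
  have : F.gauge x (dist x y) * dist x y ≤ 1 * dist x y := by gcongr
  norm_num
  linarith

lemma min_dist_map (x y : Pt n) : min 1 (dist x y) * dist x y / 4 ≤ dist (F.map x) (F.map y) := by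
  refine le_trans ?_ (gauge_bounds (F := F) x y).1
  have := min_le_gauge (F := F) x (dist_nonneg (x := x) (y := y))
  gcongr

lemma map_injective : Function.Injective F.map := by
  intro x y h
  by_contra hne
  have hd := dist_pos.2 hne
  have := F.min_dist_map x y
  rw [h, dist_self] at this
  have : 0 < min 1 (dist x y) * dist x y / 4 := by positivity
  linarith

lemma map_surjective : Function.Surjective F.map := by
  intro y
  by_cases hy : ∃ p ∈ F.S, dist y p < F.rad p
  · obtain ⟨p, hp, hyp⟩ := hy
    have hpos := F.pos p hp
    rcases eq_or_ne y p with rfl | hne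
    · refine ⟨y, ?_⟩
      rw [map_of_mem hp hyp]; simp [stretch]
    have hd : 0 < ‖y - p‖ := norm_pos_iff.2 (sub_ne_zero.2 hne)
    rw [dist_eq_norm] at hyp
    -- the preimage lies on the same ray at distance `√(rad p * ‖y - p‖)`
    set c := Real.sqrt (F.rad p / ‖y - p‖) with hc
    have hc2 : c * c = F.rad p / ‖y - p‖ := Real.mul_self_sqrt (by positivity)
    have hc0 : 0 < c := Real.sqrt_pos.2 (by positivity)
    have hn : ‖p + c • (y - p) - p‖ = c * ‖y - p‖ := by
      rw [add_sub_cancel_left, norm_smul, Real.norm_of_nonneg hc0.le]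
    have hlt : c * ‖y - p‖ < F.rad p := by
      have h1 : (c * ‖y - p‖) * (c * ‖y - p‖) = F.rad p * ‖y - p‖ := by
        rw [show (c * ‖y - p‖) * (c * ‖y - p‖) = (c * c) * ‖y - p‖ * ‖y - p‖ by ring, hc2]
        field_simp
      by_contra hcon
      push Not at hcon
      nlinarith
    refine ⟨p + c • (y - p), ?_⟩
    rw [map_of_mem hp (by rw [dist_eq_norm, hn]; exact hlt), stretch, hn,
      min_eq_right ((div_le_one hpos).2 hlt.le), add_sub_cancel_left, smul_smul]
    have : c * ‖y - p‖ / F.rad p * c = 1 := by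
      rw [show c * ‖y - p‖ / F.rad p * c = (c * c) * ‖y - p‖ / F.rad p by ring, hc2]
      field_simp
    rw [this, one_smul]; abel
  · exact ⟨y, map_of_not hy⟩

variable (F) in
/-- `F.map` as a homeomorphism. -/
def homeo : Pt n ≃ₜ Pt n where
  toEquiv := Equiv.ofBijective F.map ⟨map_injective, map_surjective⟩
  continuous_toFun := F.map_lipschitz.continuous
  continuous_invFun := by
    rw [Metric.continuous_iff]
    intro b δ hδ
    refine ⟨min 1 δ * δ / 4, by positivity, fun a ha => ?_⟩
    set e := Equiv.ofBijective F.map ⟨map_injective, map_surjective⟩ with he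
    have h1 : ∀ z, F.map (e.symm z) = z := fun z => e.apply_symm_apply z
    have h2 := F.min_dist_map (e.symm a) (e.symm b)
    rw [h1, h1] at h2
    by_contra hcon
    have hcon' : δ ≤ dist (e.symm a) (e.symm b) := not_lt.1 hcon
    have : min 1 δ * δ / 4 ≤ min 1 (dist (e.symm a) (e.symm b)) * dist (e.symm a) (e.symm b) / 4 := by
      gcongr
    linarith

lemma homeo_coe : ⇑F.homeo = F.map := rfl

end SepFamily

lemma eta_strictMono : StrictMono (fun t : ℝ≥0 => 8 * (t * (1 + t))) := by
  intro a b h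
  dsimp only
  gcongr

/-- The distortion function `t ↦ 8 t (1 + t)`. -/
def etaIso : ℝ≥0 ≃o ℝ≥0 :=
  eta_strictMono.orderIsoOfSurjective _ (by
    intro y
    apply mem_range_of_exists_le_of_exists_ge (by fun_prop)
    · exact ⟨0, by simp⟩
    · refine ⟨y, ?_⟩
      have h : y * 1 ≤ y * (1 + y) := by gcongr; exact le_self_add
      calc y = 1 * (y * 1) := by ring
        _ ≤ 8 * (y * (1 + y)) := by gcongr; norm_num)

namespace SepFamily

variable {n : ℕ} {F : SepFamily n}

lemma map_isQS : IsQS F.map etaIso := by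
  intro x a b hxb
  have hb : 0 < dist x b := dist_pos.2 hxb
  have h1 := (F.gauge_bounds x a).2
  have h2 := (F.gauge_bounds x b).1
  have h3 := F.gauge_ratio x (dist_nonneg (x := x) (y := a)) hb
  have hg := F.gauge_nonneg x hb.le
  change nndist (F.map x) (F.map a) ≤
    (8 * (nndist x a / nndist x b * (1 + nndist x a / nndist x b))) * nndist (F.map x) (F.map b)
  rw [← NNReal.coe_le_coe]
  push_cast
  set s := dist x a
  set t := dist x b
  have hs : 0 ≤ s := dist_nonneg
  calc dist (F.map x) (F.map a) ≤ 2 * F.gauge x s * s := h1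
    _ ≤ 2 * ((1 + s / t) * F.gauge x t) * s := by gcongr
    _ = (8 * (s / t * (1 + s / t))) * (F.gauge x t * t / 4) := by field_simp; ring
    _ ≤ _ := by gcongr

end SepFamily

/-! ### Jacobians of Lipschitz homeomorphisms -/

lemma volume_image_null {n : ℕ} {f : Pt n → Pt n} {K : ℝ≥0} (hf : LipschitzWith K f)
    {s : Set (Pt n)} (hs : volume s = 0) : volume (f '' s) = 0 := by
  have h1 : (Measure.hausdorffMeasure (n : ℝ) : Measure (Pt n)) ≪ volume :=
    Measure.absolutelyContinuous_isAddHaarMeasure _ _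
  have h2 : (volume : Measure (Pt n)) ≪ Measure.hausdorffMeasure (n : ℝ) :=
    Measure.absolutelyContinuous_isAddHaarMeasure _ _
  apply h2
  refine le_antisymm ((hf.hausdorffMeasure_image_le (Nat.cast_nonneg n) s).trans ?_) zero_le
  rw [h1 hs, mul_zero]

/-- By Rademacher's theorem and the area formula, a Lipschitz homeomorphism satisfies the
change-of-variables formula with `|det Df|`. -/
lemma jacobianCOV_of_lipschitz {n : ℕ} (f : Pt n ≃ₜ Pt n) {K : ℝ≥0} (hf : LipschitzWith K f) :
    JacobianCOV f (fun x => |(fderiv ℝ f x).det|) := by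
  have hae : ∀ᵐ x ∂(volume : Measure (Pt n)), DifferentiableAt ℝ f x := hf.ae_differentiableAt
  refine ⟨?_, fun g _ => ?_⟩
  · filter_upwards [hae] with x hx using ⟨_, hx.hasFDerivAt, rfl⟩
  · set s := {x | DifferentiableAt ℝ f x} with hs
    have hms : MeasurableSet s := measurableSet_of_differentiableAt ℝ f
    have hnull : volume sᶜ = 0 := hae
    have himg : volume (f '' s)ᶜ = 0 := by
      rw [← image_compl_eq f.bijective]
      exact volume_image_null hf hnull
    have h := lintegral_image_eq_lintegral_abs_det_fderiv_mul volume hms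
      (f := f) (f' := fderiv ℝ f)
      (fun x hx => (DifferentiableAt.hasFDerivAt hx).hasFDerivWithinAt) f.injective.injOn g
    rw [setLIntegral_congr (t := univ) (ae_eq_univ.2 himg),
      setLIntegral_congr (s := s) (t := univ) (ae_eq_univ.2 hnull),
      Measure.restrict_univ] at h
    rw [h]
    exact lintegral_congr fun x => mul_comm _ _

lemma abs_det_le {n : ℕ} (D : Pt n →L[ℝ] Pt n) {L : ℝ} (hL : 0 ≤ L)
    (h : ∀ v, ‖D v‖ ≤ L * ‖v‖) : |D.det| ≤ L ^ n := by
  have h1 : D '' closedBall 0 1 ⊆ closedBall 0 L := by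
    rintro _ ⟨v, hv, rfl⟩
    rw [mem_closedBall_zero_iff] at *
    nlinarith [h v]
  have h2 := measure_mono (μ := volume) h1
  rw [Measure.addHaar_image_continuousLinearMap, Measure.addHaar_closedBall _ _ hL,
    Measure.addHaar_closedBall _ _ zero_le_one] at h2
  simp only [finrank_euclideanSpace, Fintype.card_fin, one_pow, ENNReal.ofReal_one, one_mul] at h2
  have hb : volume (ball (0 : Pt n) 1) ≠ 0 := (measure_ball_pos _ _ one_pos).ne'
  rw [ENNReal.mul_le_mul_iff_left hb measure_ball_lt_top.ne,
    ENNReal.ofReal_le_ofReal_iff (by positivity)] at h2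
  exact h2

lemma le_abs_det {n : ℕ} (hn : n ≠ 0) (D : Pt n →L[ℝ] Pt n) {l : ℝ} (hl : 0 ≤ l)
    (h : ∀ v, l * ‖v‖ ≤ ‖D v‖) : l ^ n ≤ |D.det| := by
  rcases hl.eq_or_lt with rfl | hl
  · rw [zero_pow hn]; positivity
  have hinj : Function.Injective D.toLinearMap := by
    rw [injective_iff_map_eq_zero]
    intro v hv
    have := h v
    change D v = 0 at hv
    rw [hv, norm_zero] at this
    have : ‖v‖ ≤ 0 := by nlinarith [norm_nonneg v]
    simpa using this
  have hsurj : Function.Surjective D.toLinearMap := LinearMap.injective_iff_surjective.1 hinj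
  have h1 : closedBall 0 l ⊆ D '' closedBall 0 1 := by
    intro w hw
    obtain ⟨v, rfl⟩ := hsurj w
    refine ⟨v, ?_, rfl⟩
    rw [mem_closedBall_zero_iff] at *
    have h3 := (h v).trans hw
    nlinarith
  have h2 := measure_mono (μ := volume) h1
  rw [Measure.addHaar_image_continuousLinearMap, Measure.addHaar_closedBall _ _ hl.le,
    Measure.addHaar_closedBall _ _ zero_le_one] at h2
  simp only [finrank_euclideanSpace, Fintype.card_fin, one_pow, ENNReal.ofReal_one, one_mul] at h2
  have hb : volume (ball (0 : Pt n) 1) ≠ 0 := (measure_ball_pos _ _ one_pos).ne'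
  rw [ENNReal.mul_le_mul_iff_left hb measure_ball_lt_top.ne,
    ENNReal.ofReal_le_ofReal_iff (by positivity)] at h2
  exact h2

namespace SepFamily

variable {n : ℕ} {F : SepFamily n}

lemma gauge_mono (x : Pt n) {s t : ℝ} (h : s ≤ t) : F.gauge x s ≤ F.gauge x t := by
  by_cases hx : ∃ p ∈ F.S, dist x p < F.rad p
  · obtain ⟨p, hp, hxp⟩ := hx
    rw [gauge_of_mem hp hxp, gauge_of_mem hp hxp]
    have := F.pos p hp
    gcongr
  · rw [gauge_of_not hx, gauge_of_not hx]

lemma gauge_continuous (x : Pt n) : Continuous (F.gauge x) := by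
  by_cases hx : ∃ p ∈ F.S, dist x p < F.rad p
  · obtain ⟨p, hp, hxp⟩ := hx
    have : F.gauge x = fun t => min 1 ((dist x p + t) / F.rad p) := by
      ext t; rw [gauge_of_mem hp hxp]
    rw [this]
    fun_prop
  · have : F.gauge x = fun _ => 1 := by ext t; rw [gauge_of_not hx]
    rw [this]
    fun_prop

lemma fderiv_bounds {x : Pt n} (hx : DifferentiableAt ℝ F.map x) (v : Pt n) :
    F.gauge x 0 / 4 * ‖v‖ ≤ ‖fderiv ℝ F.map x v‖ ∧
      ‖fderiv ℝ F.map x v‖ ≤ 2 * F.gauge x 0 * ‖v‖ := by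
  have hlim : Tendsto (fun t : ℝ => ‖t⁻¹ • (F.map (x + t • v) - F.map x)‖)
      (nhdsWithin 0 (Ioi 0)) (nhds ‖fderiv ℝ F.map x v‖) := by
    have h := hx.hasFDerivAt.hasLineDerivAt v
    have h2 := (HasLineDerivAt.tendsto_slope_zero_right h).norm
    simpa using h2
  have hval : ∀ t : ℝ, 0 < t → ‖t⁻¹ • (F.map (x + t • v) - F.map x)‖
      = t⁻¹ * dist (F.map x) (F.map (x + t • v)) := by
    intro t ht
    rw [norm_smul, Real.norm_of_nonneg (by positivity), dist_comm, dist_eq_norm]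
  have hdist : ∀ t : ℝ, 0 < t → dist x (x + t • v) = t * ‖v‖ := by
    intro t ht
    rw [dist_eq_norm, sub_add_cancel_left, norm_neg, norm_smul, Real.norm_of_nonneg ht.le]
  constructor
  · refine ge_of_tendsto hlim ?_
    filter_upwards [self_mem_nhdsWithin] with t ht
    have ht : 0 < t := ht
    rw [hval t ht]
    have h := (F.gauge_bounds x (x + t • v)).1
    rw [hdist t ht] at h
    have hm : F.gauge x 0 ≤ F.gauge x (t * ‖v‖) := F.gauge_mono x (by positivity)
    calc F.gauge x 0 / 4 * ‖v‖ = t⁻¹ * (F.gauge x 0 * (t * ‖v‖) / 4) := by field_simp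
      _ ≤ t⁻¹ * (F.gauge x (t * ‖v‖) * (t * ‖v‖) / 4) := by gcongr
      _ ≤ _ := by gcongr
  · have hlim2 : Tendsto (fun t : ℝ => 2 * F.gauge x (t * ‖v‖) * ‖v‖)
        (nhdsWithin 0 (Ioi 0)) (nhds (2 * F.gauge x 0 * ‖v‖)) := by
      have hc : Continuous (fun t : ℝ => 2 * F.gauge x (t * ‖v‖) * ‖v‖) := by
        have := F.gauge_continuous x
        fun_prop
      have := hc.tendsto 0
      rw [zero_mul] at this
      exact this.mono_left nhdsWithin_le_nhds
    refine le_of_tendsto_of_tendsto hlim hlim2 ?_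
    filter_upwards [self_mem_nhdsWithin] with t ht
    have ht : 0 < t := ht
    rw [hval t ht]
    have h := (F.gauge_bounds x (x + t • v)).2
    rw [hdist t ht] at h
    calc t⁻¹ * dist (F.map x) (F.map (x + t • v))
        ≤ t⁻¹ * (2 * F.gauge x (t * ‖v‖) * (t * ‖v‖)) := by gcongr
      _ = _ := by field_simp

lemma det_bounds (hn : n ≠ 0) {x : Pt n} (hx : DifferentiableAt ℝ F.map x) :
    (F.gauge x 0 / 4) ^ n ≤ |(fderiv ℝ F.map x).det| ∧
      |(fderiv ℝ F.map x).det| ≤ (2 * F.gauge x 0) ^ n := by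
  have h0 := F.gauge_nonneg x le_rfl
  exact ⟨le_abs_det hn _ (by positivity) fun v => (fderiv_bounds hx v).1,
    abs_det_le _ (by positivity) fun v => (fderiv_bounds hx v).2⟩

/-- Harnack property of the infinitesimal gauge on balls away from the centres. -/
lemma gauge_harnack {x₀ x y : Pt n} {r : ℝ} (hS : ∀ p ∈ F.S, 2 * r < dist x₀ p)
    (hx : dist x x₀ < r) (hy : dist y x₀ < r) : F.gauge y 0 ≤ 3 * F.gauge x 0 := by
  by_cases h : ∃ p ∈ F.S, dist x p < F.rad p
  · obtain ⟨p, hp, hxp⟩ := h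
    have hpos := F.pos p hp
    rw [gauge_of_mem hp hxp, add_zero, min_eq_right ((div_le_one hpos).2 hxp.le)]
    have h1 := hS p hp
    have h2 : dist x₀ p ≤ dist x x₀ + dist x p := dist_triangle_left x₀ p x
    have h3 : dist y p ≤ dist y x₀ + dist x x₀ + dist x p := by
      have := dist_triangle4 y x₀ x p
      rwa [dist_comm x₀ x] at this
    have h4 : dist y p ≤ 3 * dist x p := by linarith
    by_cases hyp : dist y p < F.rad p
    · rw [gauge_of_mem hp hyp, add_zero]
      refine (min_le_right _ _).trans ?_
      rw [← mul_div_assoc]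
      gcongr
    · refine (F.gauge_le_one y 0).trans ?_
      rw [← mul_div_assoc, one_le_div hpos]
      linarith
  · rw [gauge_of_not h]
    linarith [F.gauge_le_one y 0]

lemma map_memA1 (hn : n ≠ 0) {E : Set (Pt n)} (hE : F.S ⊆ E) :
    MemA1 (fun x => |(fderiv ℝ F.map x).det|) E := by
  refine ⟨72 ^ n, by positivity, fun x₀ r hr hdist => ?_⟩
  have hS : ∀ p ∈ F.S, 2 * r < dist x₀ p := by
    intro p hp
    have h := hdist.trans_le (Metric.infEDist_le_edist_of_mem (hE hp))
    rw [edist_dist, ENNReal.ofReal_lt_ofReal_iff_of_nonneg (by positivity)] at h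
    exact h
  set h₀ := F.gauge x₀ 0
  have hh0 : 0 ≤ h₀ := F.gauge_nonneg x₀ le_rfl
  have hcen : dist x₀ x₀ < r := by simpa using hr
  have hae : ∀ᵐ x ∂(volume.restrict (ball x₀ r)),
      (h₀ / 12) ^ n ≤ |(fderiv ℝ F.map x).det| ∧ |(fderiv ℝ F.map x).det| ≤ (6 * h₀) ^ n := by
    have hd : ∀ᵐ x ∂(volume : Measure (Pt n)), DifferentiableAt ℝ F.map x :=
      F.map_lipschitz.ae_differentiableAt
    filter_upwards [ae_restrict_of_ae hd, ae_restrict_mem measurableSet_ball] with x hx hxb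
    obtain ⟨h1, h2⟩ := det_bounds hn hx
    have g1 := gauge_harnack hS hxb hcen
    have g2 := gauge_harnack hS hcen hxb
    have g0 := F.gauge_nonneg x le_rfl
    constructor
    · refine le_trans ?_ h1
      gcongr ?_ ^ n
      linarith
    · refine h2.trans ?_
      gcongr ?_ ^ n
      linarith
  have hfin : volume (ball x₀ r) < ⊤ := measure_ball_lt_top
  have hpos : 0 < volume (ball x₀ r) := measure_ball_pos _ _ hr
  have hV : 0 < volume.real (ball x₀ r) := ENNReal.toReal_pos hpos.ne' hfin.ne
  have hav : ⨍ x in ball x₀ r, |(fderiv ℝ F.map x).det| ∂volume ≤ (6 * h₀) ^ n := by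
    have : IsFiniteMeasure (volume.restrict (ball x₀ r)) :=
      ⟨by rwa [Measure.restrict_apply_univ]⟩
    rw [setAverage_eq, smul_eq_mul]
    have h_int := norm_integral_le_of_norm_le_const (μ := volume.restrict (ball x₀ r))
      (f := fun x => |(fderiv ℝ F.map x).det|) (C := (6 * h₀) ^ n)
      (hae.mono fun x hx => by simpa using hx.2)
    rw [measureReal_restrict_apply_univ] at h_int
    have := (le_abs_self _).trans h_int
    rw [inv_mul_le_iff₀ hV]
    linarith
  have hinf : (h₀ / 12) ^ n ≤
      essInf (fun x => |(fderiv ℝ F.map x).det|) (volume.restrict (ball x₀ r)) := by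
    have : NeZero (volume.restrict (ball x₀ r)) :=
      ⟨by rw [Ne, Measure.restrict_eq_zero]; exact hpos.ne'⟩
    apply le_essInf_of_ae_le
    · filter_upwards [hae] with x hx using hx.1
    · apply IsBoundedUnder.isCoboundedUnder_ge
      exact ⟨(6 * h₀) ^ n, by
        rw [eventually_map]; filter_upwards [hae] with x hx using hx.2⟩
  calc _ ≤ (6 * h₀) ^ n := hav
    _ = 72 ^ n * (h₀ / 12) ^ n := by rw [← mul_pow]; congr 1; ring
    _ ≤ _ := by gcongr

end SepFamily

/-! ### A Cantor-type set of midpoints on the line -/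

/-- Standing assumptions on the contraction ratio `l`, the half-length `τ` of the initial interval
and the similarity dimension `σ`. -/
structure Par (l τ σ : ℝ) : Prop where
  l0 : 0 < l
  l1 : l < 1 / 2
  t0 : 0 < τ
  s0 : 0 < σ
  hs : l ^ σ = 1 / 2

/-- The midpoints of the intervals of generation at most `k` in the Cantor construction on
`[-τ, τ]` with the contractions `x ↦ l x ± (1 - l) τ`. -/
def mid (l τ : ℝ) : ℕ → Finset ℝ
  | 0 => {0}
  | k + 1 => insert 0 ((mid l τ k).image (fun x => l * x + (1 - l) * τ) ∪
      (mid l τ k).image (fun x => l * x - (1 - l) * τ))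

lemma mem_mid_succ {l τ : ℝ} {k : ℕ} {b : ℝ} : b ∈ mid l τ (k + 1) ↔
    b = 0 ∨ (∃ a ∈ mid l τ k, l * a + (1 - l) * τ = b) ∨
      (∃ a ∈ mid l τ k, l * a - (1 - l) * τ = b) := by
  simp [mid]

lemma mem_mid_zero {l τ b : ℝ} : b ∈ mid l τ 0 ↔ b = 0 := by simp [mid]

lemma zero_mem_mid (l τ : ℝ) (k : ℕ) : (0 : ℝ) ∈ mid l τ k := by
  cases k <;> simp [mid]

lemma mid_mono {l τ : ℝ} {k m : ℕ} (h : k ≤ m) : mid l τ k ⊆ mid l τ m := by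
  have step : ∀ k, mid l τ k ⊆ mid l τ (k + 1) := by
    intro k
    induction k with
    | zero =>
      intro b hb
      rw [mem_mid_zero] at hb
      rw [hb]; exact zero_mem_mid _ _ _
    | succ k ih =>
      intro b hb
      rw [mem_mid_succ] at *
      rcases hb with h | ⟨a, ha, h⟩ | ⟨a, ha, h⟩
      · exact Or.inl h
      · exact Or.inr (Or.inl ⟨a, ih ha, h⟩)
      · exact Or.inr (Or.inr ⟨a, ih ha, h⟩)
  exact monotone_nat_of_le_succ step h

namespace Par

variable {l τ σ : ℝ}

lemma g0 (P : Par l τ σ) : 0 < (1 - 2 * l) * τ := by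
  have := P.l1
  exact mul_pos (by linarith) P.t0

lemma abs_le (P : Par l τ σ) {k : ℕ} {b : ℝ} (hb : b ∈ mid l τ k) : |b| ≤ τ := by
  have := P.l0
  have := P.l1
  have := P.t0
  induction k generalizing b with
  | zero =>
    rw [mem_mid_zero] at hb
    rw [hb, abs_zero]; linarith
  | succ k ih =>
    rw [mem_mid_succ] at hb
    rcases hb with rfl | ⟨a, ha, rfl⟩ | ⟨a, ha, rfl⟩
    · rw [abs_zero]; linarith
    all_goals
      have h := _root_.abs_le.1 (ih ha)
      rw [_root_.abs_le]
      constructor <;> nlinarith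

/-- Points of the right-hand copy. -/
lemma plus_ge (P : Par l τ σ) {k : ℕ} {a : ℝ} (ha : a ∈ mid l τ k) :
    (1 - 2 * l) * τ ≤ l * a + (1 - l) * τ := by
  have h := _root_.abs_le.1 (P.abs_le ha)
  have := P.l0
  nlinarith

/-- Points of the left-hand copy. -/
lemma minus_le (P : Par l τ σ) {k : ℕ} {a : ℝ} (ha : a ∈ mid l τ k) :
    l * a - (1 - l) * τ ≤ -((1 - 2 * l) * τ) := by
  have h := _root_.abs_le.1 (P.abs_le ha)
  have := P.l0
  nlinarith

lemma sep (P : Par l τ σ) {k m : ℕ} {a b : ℝ} (ha : a ∈ mid l τ k) (hb : b ∈ mid l τ m)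
    (hab : a ≠ b) : (1 - 2 * l) * τ * l ^ k ≤ |a - b| := by
  have hg := P.g0
  have hl0 := P.l0
  have hl1 := P.l1
  -- distinct first digits are at distance at least the size of the gap
  have far : ∀ {k m : ℕ} {a b : ℝ}, (1 - 2 * l) * τ ≤ |a - b| →
      (1 - 2 * l) * τ * l ^ k ≤ |a - b| := by
    intro k m a b h
    refine le_trans ?_ h
    have : l ^ k ≤ 1 := pow_le_one₀ hl0.le (by linarith)
    nlinarith
  have zero_far : ∀ {m : ℕ} {b : ℝ}, b ∈ mid l τ m → b ≠ 0 → (1 - 2 * l) * τ ≤ |b| := by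
    intro m b hb h0
    cases m with
    | zero => exact absurd (mem_mid_zero.1 hb) h0
    | succ m =>
      rcases mem_mid_succ.1 hb with h | ⟨c, hc, rfl⟩ | ⟨c, hc, rfl⟩
      · exact absurd h h0
      · exact (P.plus_ge hc).trans (le_abs_self _)
      · have := P.minus_le hc
        have := neg_le_abs (l * c - (1 - l) * τ)
        linarith
  induction k generalizing a b m with
  | zero =>
    rw [mem_mid_zero] at ha
    subst ha
    apply far (m := m)
    rw [zero_sub, abs_neg]
    exact zero_far hb hab.symm
  | succ k ih =>
    by_cases hb0 : b = 0
    · subst hb0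
      apply far (m := m)
      rw [sub_zero]
      exact zero_far ha hab
    by_cases ha0 : a = 0
    · subst ha0
      apply far (m := m)
      rw [zero_sub, abs_neg]
      exact zero_far hb hab.symm
    cases m with
    | zero => exact absurd (mem_mid_zero.1 hb) hb0
    | succ m =>
      rcases mem_mid_succ.1 ha with h | ⟨c, hc, rfl⟩ | ⟨c, hc, rfl⟩
      · exact absurd h ha0
      · rcases mem_mid_succ.1 hb with h | ⟨e, he, rfl⟩ | ⟨e, he, rfl⟩
        · exact absurd h hb0
        · have hce : c ≠ e := by rintro rfl; exact hab rfl
          have := ih hc he hce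
          rw [show l * c + (1 - l) * τ - (l * e + (1 - l) * τ) = l * (c - e) by ring, abs_mul,
            abs_of_pos hl0, pow_succ]
          nlinarith
        · apply far (m := m)
          have := P.plus_ge hc
          have := P.minus_le he
          refine le_trans ?_ (le_abs_self _)
          linarith
      · rcases mem_mid_succ.1 hb with h | ⟨e, he, rfl⟩ | ⟨e, he, rfl⟩
        · exact absurd h hb0
        · apply far (m := m)
          have := P.plus_ge he
          have := P.minus_le hc
          refine le_trans ?_ (neg_le_abs _)
          linarith
        · have hce : c ≠ e := by rintro rfl; exact hab rfl
          have := ih hc he hce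
          rw [show l * c - (1 - l) * τ - (l * e - (1 - l) * τ) = l * (c - e) by ring, abs_mul,
            abs_of_pos hl0, pow_succ]
          nlinarith

lemma card_mid (P : Par l τ σ) (k : ℕ) : (mid l τ k).card + 1 = 2 ^ (k + 1) := by
  have hg := P.g0
  have hl0 := P.l0
  induction k with
  | zero => simp [mid]
  | succ k ih =>
    have hi1 : Function.Injective (fun x : ℝ => l * x + (1 - l) * τ) := by
      intro a b h
      have h' : l * a = l * b := by simpa using h
      exact mul_left_cancel₀ hl0.ne' h'
    have hi2 : Function.Injective (fun x : ℝ => l * x - (1 - l) * τ) := by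
      intro a b h
      have h' : l * a = l * b := by simpa using h
      exact mul_left_cancel₀ hl0.ne' h'
    rw [mid, Finset.card_insert_of_notMem, Finset.card_union_of_disjoint,
      Finset.card_image_of_injective _ hi1, Finset.card_image_of_injective _ hi2, pow_succ]
    · omega
    · rw [Finset.disjoint_left]
      intro x hx hy
      rw [Finset.mem_image] at hx hy
      obtain ⟨a, ha, rfl⟩ := hx
      obtain ⟨b, hb, hab⟩ := hy
      have := P.plus_ge ha
      have := P.minus_le hb
      linarith
    · intro h
      rw [Finset.mem_union, Finset.mem_image, Finset.mem_image] at h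
      rcases h with ⟨a, ha, h⟩ | ⟨a, ha, h⟩
      · have := P.plus_ge ha
        linarith
      · have := P.minus_le ha
        linarith

lemma approx (P : Par l τ σ) {m : ℕ} {b : ℝ} (hb : b ∈ mid l τ m) (k : ℕ) :
    ∃ a ∈ mid l τ k, |a - b| ≤ l ^ k * τ := by
  have hl0 := P.l0
  have ht := P.t0
  induction k generalizing m b with
  | zero => exact ⟨0, zero_mem_mid _ _ _, by simpa using P.abs_le hb⟩
  | succ k ih =>
    have h0 : b = 0 → ∃ a ∈ mid l τ (k + 1), |a - b| ≤ l ^ (k + 1) * τ := by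
      rintro rfl
      exact ⟨0, zero_mem_mid _ _ _, by simp only [sub_zero, abs_zero]; positivity⟩
    cases m with
    | zero => exact h0 (mem_mid_zero.1 hb)
    | succ m =>
      rcases mem_mid_succ.1 hb with h | ⟨c, hc, rfl⟩ | ⟨c, hc, rfl⟩
      · exact h0 h
      · obtain ⟨a, ha, h⟩ := ih hc
        refine ⟨l * a + (1 - l) * τ, mem_mid_succ.2 (Or.inr (Or.inl ⟨a, ha, rfl⟩)), ?_⟩
        rw [show l * a + (1 - l) * τ - (l * c + (1 - l) * τ) = l * (a - c) by ring, abs_mul,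
          abs_of_pos hl0, pow_succ]
        nlinarith
      · obtain ⟨a, ha, h⟩ := ih hc
        refine ⟨l * a - (1 - l) * τ, mem_mid_succ.2 (Or.inr (Or.inr ⟨a, ha, rfl⟩)), ?_⟩
        rw [show l * a - (1 - l) * τ - (l * c - (1 - l) * τ) = l * (a - c) by ring, abs_mul,
          abs_of_pos hl0, pow_succ]
        nlinarith

lemma pow_rpow (P : Par l τ σ) (k : ℕ) : ((l ^ k : ℝ)) ^ σ = (1 / 2) ^ k := by
  rw [← Real.rpow_natCast l k, ← Real.rpow_mul P.l0.le, mul_comm, Real.rpow_mul P.l0.le, P.hs,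
    Real.rpow_natCast]

/-- The number of midpoints of generation at most `k` in an interval of length `L`. An interval
shorter than the gap sees at most one of the two copies, which gives the induction by rescaling;
longer intervals are handled by the total number of points. -/
lemma count (P : Par l τ σ) (k : ℕ) (a : ℝ) {L : ℝ} (hL : 0 ≤ L) :
    (((mid l τ k).filter (fun x => a ≤ x ∧ x ≤ a + L)).card : ℝ)
      ≤ max 1 (2 * (L / ((1 - 2 * l) * τ * l ^ k)) ^ σ) := by
  have hg := P.g0
  have hl0 := P.l0
  set g := (1 - 2 * l) * τ with hgdef
  induction k generalizing a L with
  | zero =>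
    refine le_max_of_le_left ?_
    have : ((mid l τ 0).filter (fun x => a ≤ x ∧ x ≤ a + L)).card ≤ (mid l τ 0).card :=
      Finset.card_filter_le _ _
    simp only [mid, Finset.card_singleton] at this
    exact_mod_cast this
  | succ k ih =>
    rcases le_or_gt g L with hgL | hgL
    · refine le_max_of_le_right ?_
      have h1 : ((mid l τ (k + 1)).filter (fun x => a ≤ x ∧ x ≤ a + L)).card ≤ 2 ^ (k + 2) := by
        have := Finset.card_filter_le (mid l τ (k + 1)) (fun x => a ≤ x ∧ x ≤ a + L)
        have h2 := P.card_mid (k + 1)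
        rw [show k + 1 + 1 = k + 2 from rfl] at h2
        omega
      calc (((mid l τ (k + 1)).filter (fun x => a ≤ x ∧ x ≤ a + L)).card : ℝ)
          ≤ (2 : ℝ) ^ (k + 2) := by exact_mod_cast h1
        _ = 2 * (1 / l ^ (k + 1)) ^ σ := by
          rw [Real.div_rpow zero_le_one (by positivity), P.pow_rpow, Real.one_rpow, one_div,
            one_div, inv_pow, inv_inv, pow_succ _ (k + 1), mul_comm]
        _ ≤ 2 * (L / (g * l ^ (k + 1))) ^ σ := by
          have hle : 1 / l ^ (k + 1) ≤ L / (g * l ^ (k + 1)) := by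
            rw [div_le_div_iff₀ (by positivity) (by positivity)]
            have : 0 < l ^ (k + 1) := by positivity
            nlinarith
          have := Real.rpow_le_rpow (by positivity) hle P.s0.le
          linarith
    · -- the copy containing the points is a rescaled set of generation `k`
      have hscale : ∀ c, (mid l τ (k + 1)).filter (fun x => a ≤ x ∧ x ≤ a + L)
          ⊆ (mid l τ k).image (fun x => l * x + c) →
          (((mid l τ (k + 1)).filter (fun x => a ≤ x ∧ x ≤ a + L)).card : ℝ)
            ≤ max 1 (2 * (L / (g * l ^ (k + 1))) ^ σ) := by
        intro c hc
        have hsub : (mid l τ (k + 1)).filter (fun x => a ≤ x ∧ x ≤ a + L) ⊆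
            ((mid l τ k).filter (fun x => (a - c) / l ≤ x ∧ x ≤ (a - c) / l + L / l)).image
              (fun x => l * x + c) := by
          intro x hx
          obtain ⟨y, hy, rfl⟩ := Finset.mem_image.1 (hc hx)
          have hx' := (Finset.mem_filter.1 hx).2
          refine Finset.mem_image.2 ⟨y, Finset.mem_filter.2 ⟨hy, ?_, ?_⟩, rfl⟩
          · rw [div_le_iff₀ hl0]; linarith [hx'.1]
          · rw [← add_div, le_div_iff₀ hl0]; linarith [hx'.2]
        have h1 := (Finset.card_le_card hsub).trans Finset.card_image_le
        have h2 := ih ((a - c) / l) (L := L / l) (by positivity)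
        have h3 : L / l / (g * l ^ k) = L / (g * l ^ (k + 1)) := by
          rw [div_div, pow_succ]; congr 1; ring
        rw [h3] at h2
        exact le_trans (by exact_mod_cast h1) h2
      by_cases hp : ∃ y ∈ mid l τ k, a ≤ l * y + (1 - l) * τ ∧ l * y + (1 - l) * τ ≤ a + L
      · obtain ⟨y, hy, h1, h2⟩ := hp
        have := P.plus_ge hy
        apply hscale ((1 - l) * τ)
        intro x hx
        obtain ⟨hx1, hx2, hx3⟩ := Finset.mem_filter.1 hx
        rcases mem_mid_succ.1 hx1 with h | ⟨e, he, h⟩ | ⟨e, he, h⟩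
        · linarith
        · exact Finset.mem_image.2 ⟨e, he, h⟩
        · have := P.minus_le he
          linarith
      by_cases hm : ∃ y ∈ mid l τ k, a ≤ l * y - (1 - l) * τ ∧ l * y - (1 - l) * τ ≤ a + L
      · obtain ⟨y, hy, h1, h2⟩ := hm
        have := P.minus_le hy
        apply hscale (-((1 - l) * τ))
        intro x hx
        obtain ⟨hx1, hx2, hx3⟩ := Finset.mem_filter.1 hx
        rcases mem_mid_succ.1 hx1 with h | ⟨e, he, h⟩ | ⟨e, he, h⟩
        · linarith
        · have := P.plus_ge he
          linarith
        · exact Finset.mem_image.2 ⟨e, he, by rw [← h]; ring⟩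
      · refine le_max_of_le_left ?_
        have hsub : (mid l τ (k + 1)).filter (fun x => a ≤ x ∧ x ≤ a + L) ⊆ {0} := by
          intro x hx
          obtain ⟨hx1, hx2, hx3⟩ := Finset.mem_filter.1 hx
          rw [Finset.mem_singleton]
          rcases mem_mid_succ.1 hx1 with h | ⟨e, he, rfl⟩ | ⟨e, he, rfl⟩
          · exact h
          · exact absurd ⟨e, he, hx2, hx3⟩ hp
          · exact absurd ⟨e, he, hx2, hx3⟩ hm
        have := Finset.card_le_card hsub
        rw [Finset.card_singleton] at this
        exact_mod_cast this

end Par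

/-! ### The product grids and their dimension -/

/-- The points of `ℝⁿ` all of whose coordinates are midpoints of generation at most `k`. -/
def grid (n : ℕ) (l τ : ℝ) (k : ℕ) : Finset (Pt n) :=
  (Fintype.piFinset fun _ : Fin n => mid l τ k).map (WithLp.equiv 2 (Fin n → ℝ)).symm.toEmbedding

/-- The union of all grids. -/
def gridSet (n : ℕ) (l τ : ℝ) : Set (Pt n) := {x | ∃ k, x ∈ grid n l τ k}

lemma mem_grid {n : ℕ} {l τ : ℝ} {k : ℕ} {x : Pt n} :
    x ∈ grid n l τ k ↔ ∀ i, x i ∈ mid l τ k := by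
  unfold grid
  rw [Finset.mem_map_equiv]
  simp

lemma card_grid {n : ℕ} {l τ : ℝ} (k : ℕ) : (grid n l τ k).card = (mid l τ k).card ^ n := by
  simp [grid]

lemma abs_sub_le_dist {n : ℕ} (x y : Pt n) (i : Fin n) : |x i - y i| ≤ dist x y := by
  rw [dist_eq_norm]
  exact PiLp.norm_apply_le (x - y) i

namespace Par

variable {l τ σ : ℝ} {n : ℕ}

lemma two_pow_le_card (P : Par l τ σ) (k : ℕ) : 2 ^ (n * k) ≤ (grid n l τ k).card := by
  rw [card_grid, mul_comm, pow_mul]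
  apply Nat.pow_le_pow_left
  have := P.card_mid k
  have : 1 ≤ 2 ^ k := Nat.one_le_two_pow
  rw [pow_succ] at *
  omega

lemma card_le_two_pow (P : Par l τ σ) (k : ℕ) : (grid n l τ k).card ≤ 2 ^ (n * (k + 1)) := by
  rw [card_grid, mul_comm n, pow_mul]
  apply Nat.pow_le_pow_left
  have := P.card_mid k
  omega

lemma grid_sep (P : Par l τ σ) {k m : ℕ} {p q : Pt n} (hp : p ∈ grid n l τ k)
    (hq : q ∈ grid n l τ m) (hpq : p ≠ q) :
    ∃ i, (1 - 2 * l) * τ * l ^ k ≤ |p i - q i| := by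
  have : ∃ i, p i ≠ q i := by
    by_contra h
    push Not at h
    exact hpq (PiLp.ext h)
  obtain ⟨i, hi⟩ := this
  exact ⟨i, P.sep (mem_grid.1 hp i) (mem_grid.1 hq i) hi⟩

lemma grid_norm (P : Par l τ σ) (hτ : τ * (2 * n) ≤ 1) {k : ℕ} {p : Pt n}
    (hp : p ∈ grid n l τ k) : ‖p‖ ≤ 1 / 2 := by
  have h1 : ‖p‖ ^ 2 ≤ n * τ ^ 2 := by
    rw [EuclideanSpace.norm_sq_eq]
    calc ∑ i, ‖p i‖ ^ 2 ≤ ∑ _i : Fin n, τ ^ 2 := by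
          gcongr with i
          exact P.abs_le (mem_grid.1 hp i)
      _ = _ := by simp
  have ht := P.t0
  rcases Nat.eq_zero_or_pos n with rfl | hn
  · have : ‖p‖ ^ 2 ≤ 0 := by simpa using h1
    nlinarith [norm_nonneg p]
  · have hn' : (1 : ℝ) ≤ n := by exact_mod_cast hn
    have h2 : (n * τ) ≤ 1 / 2 := by linarith
    have h3 : n * τ ^ 2 ≤ (1 / 2) ^ 2 := by
      calc n * τ ^ 2 ≤ n * τ ^ 2 * n := by
            have : 0 ≤ n * τ ^ 2 := by positivity
            nlinarith
        _ = (n * τ) ^ 2 := by ring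
        _ ≤ (1 / 2) ^ 2 := by gcongr
    exact abs_le_of_sq_le_sq' (h1.trans h3) (by norm_num) |>.2

open Classical in
lemma grid_count (P : Par l τ σ) (k : ℕ) (c : Pt n) {L : ℝ} (hL : 0 ≤ L) :
    (((grid n l τ k).filter (fun x => x ∈ closedCube c L)).card : ℝ)
      ≤ (max 1 (2 * (L / ((1 - 2 * l) * τ * l ^ k)) ^ σ)) ^ n := by
  have hsub : (grid n l τ k).filter (fun x => x ∈ closedCube c L) ⊆
      (Fintype.piFinset fun i : Fin n =>
        (mid l τ k).filter (fun x => c i ≤ x ∧ x ≤ c i + L)).map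
          (WithLp.equiv 2 (Fin n → ℝ)).symm.toEmbedding := by
    intro x hx
    obtain ⟨h1, h2⟩ := Finset.mem_filter.1 hx
    rw [Finset.mem_map_equiv]
    simp only [Equiv.symm_symm, Fintype.mem_piFinset, Finset.mem_filter]
    exact fun i => ⟨mem_grid.1 h1 i, h2 i⟩
  have h := Finset.card_le_card hsub
  rw [Finset.card_map, Fintype.card_piFinset] at h
  calc (((grid n l τ k).filter (fun x => x ∈ closedCube c L)).card : ℝ)
      ≤ ∏ i : Fin n, (((mid l τ k).filter (fun x => c i ≤ x ∧ x ≤ c i + L)).card : ℝ) := by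
        exact_mod_cast h
    _ ≤ ∏ _i : Fin n, (max 1 (2 * (L / ((1 - 2 * l) * τ * l ^ k)) ^ σ)) := by
        gcongr with i
        exact P.count k (c i) hL
    _ = _ := by simp

/-- The point all of whose coordinates are `t`. -/
def diag (n : ℕ) (t : ℝ) : Pt n := (WithLp.equiv 2 (Fin n → ℝ)).symm fun _ => t

@[simp] lemma diag_apply (t : ℝ) (i : Fin n) : diag n t i = t := rfl

lemma ball_subset_cube (x : Pt n) (r : ℝ) : ball x r ⊆ closedCube (x - diag n r) (2 * r) := by
  intro y hy i
  have h := (abs_sub_le_dist y x i).trans (mem_ball.1 hy).le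
  rw [_root_.abs_le] at h
  simp only [PiLp.sub_apply, diag_apply]
  constructor <;> linarith [h.1, h.2]

lemma exists_cover (P : Par l τ σ) (x : Pt n) {R r : ℝ} {k : ℕ} (hR : 0 ≤ R)
    (hr : 2 * (l ^ k * τ) ≤ r) :
    ∃ s : Finset (Pt n), (gridSet n l τ ∩ ball x R ⊆ ⋃ c ∈ s, closedCube c r) ∧
      (s.card : ℝ) ≤ (max 1 (2 * ((2 * R + 2 * (l ^ k * τ)) / ((1 - 2 * l) * τ * l ^ k)) ^ σ)) ^ n
      := by
  classical
  have hl0 := P.l0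
  have ht := P.t0
  set e := l ^ k * τ with he
  have he0 : 0 < e := by positivity
  set Q := (grid n l τ k).filter
    (fun y => y ∈ closedCube (x - diag n (R + e)) (2 * R + 2 * e)) with hQ
  refine ⟨Q.image (fun y => y - diag n e), ?_, ?_⟩
  · rintro y ⟨⟨m, hym⟩, hyB⟩
    have hyc := ball_subset_cube x R hyB
    choose a ha hab using fun i => P.approx (mem_grid.1 hym i) k
    set z : Pt n := (WithLp.equiv 2 (Fin n → ℝ)).symm a with hz
    have hzi : ∀ i, z i = a i := fun i => rfl
    simp only [mem_iUnion]
    refine ⟨z - diag n e, Finset.mem_image.2 ⟨z, Finset.mem_filter.2 ⟨mem_grid.2 ha, ?_⟩, rfl⟩, ?_⟩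
    · intro i
      have h1 := hyc i
      have h2 := _root_.abs_le.1 (hab i)
      simp only [PiLp.sub_apply, diag_apply] at h1 ⊢
      rw [hzi]
      constructor <;> linarith [h1.1, h1.2, h2.1, h2.2]
    · intro i
      have h2 := _root_.abs_le.1 (hab i)
      simp only [PiLp.sub_apply, diag_apply]
      rw [hzi]
      constructor <;> linarith [h2.1, h2.2]
  · refine le_trans ?_ (P.grid_count k (x - diag n (R + e)) (L := 2 * R + 2 * e) (by positivity))
    exact_mod_cast Finset.card_image_le

/-- The constant in the covering estimate `Ncov_le`. -/
def covC (l σ : ℝ) (n : ℕ) : ℝ := (2 * (6 / ((1 - 2 * l) * l)) ^ σ) ^ n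

lemma six_div_ge (P : Par l τ σ) : 1 ≤ 6 / ((1 - 2 * l) * l) := by
  have := P.l0
  have := P.l1
  rw [one_le_div (by nlinarith)]
  nlinarith

lemma one_le_covC (P : Par l τ σ) : 1 ≤ covC l σ n := by
  apply one_le_pow₀
  have := Real.one_le_rpow P.six_div_ge P.s0.le
  linarith

lemma cover_bound (P : Par l τ σ) (x : Pt n) {R r : ℝ} (hr : 0 < r) (hrτ : r ≤ 2 * τ)
    (hrR : r ≤ R) :
    ∃ s : Finset (Pt n), (gridSet n l τ ∩ ball x R ⊆ ⋃ c ∈ s, closedCube c r) ∧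
      (s.card : ℝ) ≤ covC l σ n * (R / r) ^ (n * σ) := by
  have hl0 := P.l0
  have hl1 := P.l1
  have ht := P.t0
  have hR : 0 < R := hr.trans_le hrR
  obtain ⟨k, hk1, hk2⟩ := exists_nat_pow_near_of_lt_one (x := r / (2 * τ)) (y := l)
    (by positivity) ((div_le_one (by positivity)).2 hrτ) hl0 (by linarith)
  rw [lt_div_iff₀ (by positivity)] at hk1
  rw [div_le_iff₀ (by positivity)] at hk2
  have hk3 : 2 * (l ^ (k + 1) * τ) ≤ r := by linarith
  obtain ⟨s, hs1, hs2⟩ := P.exists_cover x hR.le hk3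
  refine ⟨s, hs1, hs2.trans ?_⟩
  have hg : 0 < 1 - 2 * l := by linarith
  have h1 : (2 * R + 2 * (l ^ (k + 1) * τ)) / ((1 - 2 * l) * τ * l ^ (k + 1))
      ≤ 6 / ((1 - 2 * l) * l) * (R / r) := by
    rw [div_mul_div_comm, div_le_div_iff₀ (by positivity) (by positivity)]
    have h2 : l * r ≤ 2 * (l ^ (k + 1) * τ) := by
      rw [pow_succ]
      nlinarith
    have h3 : 2 * R + 2 * (l ^ (k + 1) * τ) ≤ 3 * R := by linarith
    calc (2 * R + 2 * (l ^ (k + 1) * τ)) * ((1 - 2 * l) * l * r)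
        ≤ (3 * R) * ((1 - 2 * l) * l * r) := by gcongr
      _ = 3 * R * (1 - 2 * l) * (l * r) := by ring
      _ ≤ 3 * R * (1 - 2 * l) * (2 * (l ^ (k + 1) * τ)) := by gcongr
      _ = _ := by ring
  have hRr : 1 ≤ R / r := (one_le_div hr).2 hrR
  have h4 : max 1 (2 * ((2 * R + 2 * (l ^ (k + 1) * τ)) / ((1 - 2 * l) * τ * l ^ (k + 1))) ^ σ)
      ≤ 2 * (6 / ((1 - 2 * l) * l)) ^ σ * (R / r) ^ σ := by
    rw [mul_assoc 2 ((6 / ((1 - 2 * l) * l)) ^ σ), ← Real.mul_rpow (by positivity) (by positivity)]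
    apply max_le
    · have h5 : 1 ≤ 6 / ((1 - 2 * l) * l) * (R / r) := by
        have := P.six_div_ge
        nlinarith
      have := Real.one_le_rpow h5 P.s0.le
      linarith
    · have := Real.rpow_le_rpow (by positivity) h1 P.s0.le
      linarith
  calc _ ≤ (2 * (6 / ((1 - 2 * l) * l)) ^ σ * (R / r) ^ σ) ^ n := by gcongr
    _ = _ := by
      rw [mul_pow, covC, mul_comm (n : ℝ) σ, Real.rpow_mul (by positivity), Real.rpow_natCast]

lemma Ncov_le (P : Par l τ σ) (x : Pt n) {R r : ℝ} (hr : 0 < r) (hrτ : r ≤ 2 * τ)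
    (hrR : r ≤ R) :
    (Ncov r (gridSet n l τ ∩ ball x R) : ℝ) ≤ covC l σ n * (R / r) ^ (n * σ) := by
  obtain ⟨s, hs1, hs2⟩ := P.cover_bound x hr hrτ hrR
  refine le_trans ?_ hs2
  have h : Ncov r (gridSet n l τ ∩ ball x R) ≤ s.card := Nat.sInf_le ⟨s, rfl, hs1⟩
  exact_mod_cast h

lemma le_Ncov (P : Par l τ σ) (hτ : τ * (2 * n) ≤ 1) {r : ℝ} {k : ℕ} (hr : 0 < r)
    (hrτ : r ≤ 2 * τ) (hr1 : r ≤ 1) (hrk : r < (1 - 2 * l) * τ * l ^ k) :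
    2 ^ (n * k) ≤ Ncov r (gridSet n l τ ∩ ball (0 : Pt n) 1) := by
  have hne : {m : ℕ | ∃ s : Finset (Pt n), s.card = m ∧
      gridSet n l τ ∩ ball (0 : Pt n) 1 ⊆ ⋃ c ∈ s, closedCube c r}.Nonempty := by
    obtain ⟨s, hs, _⟩ := P.cover_bound (0 : Pt n) hr hrτ hr1
    exact ⟨_, s, rfl, hs⟩
  obtain ⟨s, hs, hcov⟩ := Nat.sInf_mem hne
  change s.card = Ncov r _ at hs
  rw [← hs]
  refine (P.two_pow_le_card k).trans ?_
  have hex : ∀ p ∈ grid n l τ k, ∃ c ∈ s, p ∈ closedCube c r := by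
    intro p hp
    have : p ∈ gridSet n l τ ∩ ball (0 : Pt n) 1 := by
      refine ⟨⟨k, hp⟩, ?_⟩
      rw [mem_ball_zero_iff]
      linarith [P.grid_norm hτ hp]
    simpa using hcov this
  choose! c hc1 hc2 using hex
  refine Finset.card_le_card_of_injOn c hc1 ?_
  -- a cube of edge less than the separation contains at most one grid point
  intro p hp q hq hpq
  by_contra hne
  obtain ⟨i, hi⟩ := P.grid_sep hp hq hne
  have h1 := hc2 p hp i
  have h2 := hc2 q hq i
  rw [← hpq] at h2
  have : |p i - q i| ≤ r := by
    rw [_root_.abs_le]; constructor <;> linarith [h1.1, h1.2, h2.1, h2.2]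
  linarith

lemma ratio_le (P : Par l τ σ) {N r d : ℝ} (hN : 1 < N) (hr : 0 < r) (hrτ : r ≤ 2 * τ)
    (hd : d ∈ locRatios (gridSet n l τ) N r 1) :
    d ≤ n * σ + Real.log (covC l σ n) / Real.log N := by
  obtain ⟨x, R, hR, hNR, _, rfl⟩ := hd
  have hrR : r ≤ R := by nlinarith
  have hNR' : N ≤ R / r := (le_div_iff₀ hr).2 hNR
  have hlogN : 0 < Real.log N := Real.log_pos hN
  have hlog : Real.log N ≤ Real.log (R / r) := Real.log_le_log (by linarith) hNR'
  have hlogC : 0 ≤ Real.log (covC l σ n) := Real.log_nonneg P.one_le_covC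
  have hC := P.one_le_covC (n := n)
  have hcov := P.Ncov_le x hr hrτ hrR
  have hnum : Real.log (Ncov r (gridSet n l τ ∩ ball x R))
      ≤ Real.log (covC l σ n) + n * σ * Real.log (R / r) := by
    rcases Nat.eq_zero_or_pos (Ncov r (gridSet n l τ ∩ ball x R)) with h0 | h0
    · rw [h0, Nat.cast_zero, Real.log_zero]
      have := P.s0
      have : 0 ≤ n * σ * Real.log (R / r) := by
        have : 0 ≤ Real.log (R / r) := by linarith
        positivity
      linarith
    · have h := Real.log_le_log (by exact_mod_cast h0) hcov
      have hRr : 0 < R / r := by positivity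
      rwa [Real.log_mul (by positivity) (by positivity), Real.log_rpow hRr] at h
  have hpos : 0 < Real.log (R / r) := by linarith
  calc _ ≤ (Real.log (covC l σ n) + n * σ * Real.log (R / r)) / Real.log (R / r) := by gcongr
    _ = n * σ + Real.log (covC l σ n) / Real.log (R / r) := by field_simp; ring
    _ ≤ _ := by gcongr

lemma log_two_eq (P : Par l τ σ) : Real.log 2 = σ * -Real.log l := by
  have h := congrArg Real.log P.hs
  rw [Real.log_rpow P.l0, one_div, Real.log_inv] at h
  linarith

lemma dimLoc_gridSet (P : Par l τ σ) (hτ : τ * (2 * n) ≤ 1) :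
    dimLoc (gridSet n l τ) = n * σ := by
  have hl0 := P.l0
  have hl1 := P.l1
  have ht := P.t0
  have hg := P.g0
  set Φ : ℝ → ℝ → ℝ := fun N r => sSup (locRatios (gridSet n l τ) N r 1) with hΦ
  have hbdd : ∀ {N r : ℝ}, 1 < N → 0 < r → r ≤ 2 * τ →
      BddAbove (locRatios (gridSet n l τ) N r 1) := fun hN hr hrτ =>
    ⟨_, fun d hd => P.ratio_le hN hr hrτ hd⟩
  -- the explicit radii at which the ball `B(0,1)` realises the dimension
  set ρ : ℕ → ℝ := fun k => (1 - 2 * l) * τ * l ^ k / 2 with hρ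
  have hρ0 : ∀ k, 0 < ρ k := fun k => by positivity
  have hρlim : Tendsto ρ atTop (nhdsWithin 0 (Ioi 0)) := by
    rw [tendsto_nhdsWithin_iff]
    refine ⟨?_, Eventually.of_forall hρ0⟩
    have h := tendsto_pow_atTop_nhds_zero_of_lt_one hl0.le (by linarith : l < 1)
    have h2 := (h.const_mul ((1 - 2 * l) * τ)).div_const 2
    simpa using h2
  have hsmall : ∀ c : ℝ, 0 < c → ∀ᶠ r in nhdsWithin (0 : ℝ) (Ioi 0), 0 < r ∧ r ≤ c := by
    intro c hc
    filter_upwards [Ioc_mem_nhdsGT hc] with r hr using hr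
  have hup : ∀ N : ℝ, 1 < N → ∀ᶠ r in nhdsWithin (0 : ℝ) (Ioi 0),
      0 ≤ Φ N r ∧ Φ N r ≤ n * σ + Real.log (covC l σ n) / Real.log N := by
    intro N hN
    filter_upwards [hsmall (2 * τ) (by positivity), hsmall (1 / N) (by positivity)] with r h1 h2
    have hne : (locRatios (gridSet n l τ) N r 1).Nonempty := by
      refine ⟨_, 0, 1, one_pos, ?_, le_rfl, rfl⟩
      have := (le_div_iff₀ (by linarith : 0 < N)).1 h2.2
      linarith
    refine ⟨?_, csSup_le hne fun d hd => P.ratio_le hN h1.1 h1.2 hd⟩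
    apply Real.sSup_nonneg
    rintro _ ⟨x, R, hR, hNR, _, rfl⟩
    apply div_nonneg (Real.log_natCast_nonneg _)
    apply Real.log_nonneg
    rw [one_le_div h1.1]
    nlinarith [h1.1]
  have hbu : ∀ N : ℝ, 1 < N → IsBoundedUnder (· ≤ ·) (nhdsWithin (0 : ℝ) (Ioi 0)) (Φ N) := by
    intro N hN
    exact ⟨_, by rw [eventually_map]; exact (hup N hN).mono fun r h => h.2⟩
  have hcb : ∀ N : ℝ, 1 < N → IsCoboundedUnder (· ≤ ·) (nhdsWithin (0 : ℝ) (Ioi 0)) (Φ N) := by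
    intro N hN
    apply IsBoundedUnder.isCoboundedUnder_le
    exact ⟨0, by rw [eventually_map]; exact (hup N hN).mono fun r h => h.1⟩
  have hupper : ∀ N : ℝ, 1 < N → limsup (Φ N) (nhdsWithin 0 (Ioi 0))
      ≤ n * σ + Real.log (covC l σ n) / Real.log N := fun N hN =>
    limsup_le_of_le (hcb N hN) ((hup N hN).mono fun r h => h.2)
  have hlower : ∀ N : ℝ, 1 < N → n * σ ≤ limsup (Φ N) (nhdsWithin 0 (Ioi 0)) := by
    intro N hN
    set b : ℝ := -Real.log ((1 - 2 * l) * τ / 2) with hb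
    set ψ : ℕ → ℝ := fun k => (k * (n * Real.log 2)) / (k * (-Real.log l) + b) with hψ
    have hll : 0 < -Real.log l := by
      have := Real.log_neg hl0 (by linarith)
      linarith
    have hψlim : Tendsto ψ atTop (nhds (n * σ)) := by
      have h1 : Tendsto (fun k : ℕ => (n * Real.log 2) / (-Real.log l + b * (k : ℝ)⁻¹)) atTop
          (nhds ((n * Real.log 2) / (-Real.log l + b * 0))) := by
        apply Filter.Tendsto.div tendsto_const_nhds
        · exact tendsto_const_nhds.add
            (tendsto_const_nhds.mul tendsto_inv_atTop_nhds_zero_nat)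
        · simpa using hll.ne'
      rw [P.log_two_eq, mul_zero, add_zero] at h1
      have h2 : n * (σ * -Real.log l) / -Real.log l = n * σ := by
        rw [← mul_assoc, mul_div_cancel_right₀ _ hll.ne']
      rw [h2, ← P.log_two_eq] at h1
      refine h1.congr' ?_
      filter_upwards [eventually_gt_atTop 0] with k hk
      have hk' : (k : ℝ) ≠ 0 := by positivity
      rw [hψ]
      dsimp only
      rw [← mul_div_mul_left _ _ hk']
      congr 1
      field_simp
    have hev : ∀ᶠ k : ℕ in atTop, ψ k ≤ Φ N (ρ k) := by
      have hs1 := hρlim.eventually (hsmall (2 * τ) (by positivity))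
      have hs2 := hρlim.eventually (hsmall (1 / N) (by positivity))
      filter_upwards [hs1, hs2] with k h1 h2
      have hNr : N * ρ k ≤ 1 := by
        have := (le_div_iff₀ (by linarith : 0 < N)).1 h2.2
        linarith
      have hr1 : ρ k < 1 := by nlinarith [hρ0 k]
      have hlt : ρ k < (1 - 2 * l) * τ * l ^ k := by
        have : 0 < (1 - 2 * l) * τ * l ^ k := by positivity
        simp only [hρ]
        linarith
      have hN1 := P.le_Ncov hτ (hρ0 k) h1.2 hr1.le hlt
      refine le_csSup_of_le (hbdd hN h1.1 h1.2) ⟨0, 1, one_pos, hNr, le_rfl, rfl⟩ ?_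
      have hden : Real.log (1 / ρ k) = k * (-Real.log l) + b := by
        rw [one_div, Real.log_inv, hb, hρ]
        dsimp only
        rw [show (1 - 2 * l) * τ * l ^ k / 2 = ((1 - 2 * l) * τ / 2) * l ^ k by ring,
          Real.log_mul (by positivity) (by positivity), Real.log_pow]
        ring
      have hdpos : 0 < Real.log (1 / ρ k) := Real.log_pos (by
        rw [lt_div_iff₀ (hρ0 k)]; linarith)
      simp only [hψ]
      rw [← hden]
      gcongr
      have h3 : Real.log ((2 : ℝ) ^ (n * k))
          ≤ Real.log (Ncov (ρ k) (gridSet n l τ ∩ ball (0 : Pt n) 1)) := by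
        apply Real.log_le_log (by positivity)
        exact_mod_cast hN1
      rw [Real.log_pow] at h3
      push_cast at h3
      linarith
    refine le_of_forall_lt fun a ha => ?_
    obtain ⟨a', ha1, ha2⟩ := exists_between ha
    refine lt_of_lt_of_le ha1 (le_limsup_of_frequently_le ?_ (hbu N hN))
    refine hρlim.frequently (Eventually.frequently ?_)
    filter_upwards [hev, hψlim.eventually (lt_mem_nhds ha2)] with k h1 h2
    linarith
  have hlim : Tendsto (fun N : ℝ => limsup (Φ N) (nhdsWithin 0 (Ioi 0))) atTop
      (nhds (n * σ)) := by
    have h1 : Tendsto (fun N : ℝ => n * σ + Real.log (covC l σ n) / Real.log N) atTop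
        (nhds (n * σ + 0)) :=
      tendsto_const_nhds.add (Real.tendsto_log_atTop.const_div_atTop _)
    rw [add_zero] at h1
    refine tendsto_of_tendsto_of_tendsto_of_le_of_le' tendsto_const_nhds h1 ?_ ?_
    · filter_upwards [eventually_gt_atTop 1] with N hN using hlower N hN
    · filter_upwards [eventually_gt_atTop 1] with N hN using hupper N hN
  exact hlim.liminf_eq

end Par

/-! ### Estimates for the double integrals -/

section Energy

variable {n : ℕ} {α : ℝ}

/-- The double integral in the definition of the `Q_α`-norm, over `B × B`. -/
def energy (α : ℝ) (u : Pt n → ℝ) (B : Set (Pt n)) : ℝ≥0∞ :=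
  ∫⁻ x in B, ∫⁻ y in B, ENNReal.ofReal (|u x - u y| ^ 2 / ‖x - y‖ ^ ((n : ℝ) + 2 * α))

/-- The truncated kernel `min(1, |z|²/t²) / |z|^(n+2α)`. -/
def trunc (α t : ℝ) (z : Pt n) : ℝ≥0∞ :=
  ENNReal.ofReal (min 1 (‖z‖ ^ 2 / t ^ 2) / ‖z‖ ^ ((n : ℝ) + 2 * α))

/-- The integral of the truncated kernel at scale one. -/
def truncC (n : ℕ) (α : ℝ) : ℝ≥0∞ := ∫⁻ z : Pt n, trunc α 1 z

lemma measurable_trunc (t : ℝ) : Measurable (trunc (n := n) α t) := by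
  unfold trunc
  fun_prop

lemma truncC_lt_top (hn : n ≠ 0) (h0 : 0 < α) (h1 : α < 1) : truncC n α < ⊤ := by
  have : Nontrivial (Pt n) := by
    have : Nonempty (Fin n) := ⟨⟨0, Nat.pos_of_ne_zero hn⟩⟩
    infer_instance
  set φ : ℝ → ℝ := fun y => min 1 (y ^ 2 / 1 ^ 2) / y ^ ((n : ℝ) + 2 * α) with hφ
  have h_int : Integrable (fun z : Pt n => φ ‖z‖) volume := by
    rw [integrable_fun_norm_addHaar, finrank_euclideanSpace_fin]
    have hpow : ∀ y : ℝ, 0 < y → (y : ℝ) ^ (n - 1) = y ^ ((n : ℝ) - 1) := by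
      intro y hy
      rw [← Real.rpow_natCast, Nat.cast_sub (Nat.one_le_iff_ne_zero.2 hn), Nat.cast_one]
    rw [← Ioc_union_Ioi_eq_Ioi (zero_le_one (α := ℝ))]
    apply IntegrableOn.union
    · have : IntegrableOn (fun y : ℝ => y ^ (1 - 2 * α)) (Ioc 0 1) :=
        (intervalIntegrable_iff_integrableOn_Ioc_of_le zero_le_one).1
          (intervalIntegral.intervalIntegrable_rpow' (by linarith))
      refine this.congr_fun ?_ measurableSet_Ioc
      intro y hy
      simp only [hφ, smul_eq_mul]
      rw [hpow y hy.1, min_eq_right (by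
        rw [one_pow, div_one]; exact pow_le_one₀ hy.1.le hy.2), one_pow, div_one,
        ← Real.rpow_natCast y 2, ← Real.rpow_sub hy.1, ← Real.rpow_add hy.1]
      congr 1
      push_cast
      ring
    · have : IntegrableOn (fun y : ℝ => y ^ (-1 - 2 * α)) (Ioi 1) :=
        integrableOn_Ioi_rpow_of_lt (by linarith) one_pos
      refine this.congr_fun ?_ measurableSet_Ioi
      intro y hy
      have hy' : (1 : ℝ) < y := hy
      have hy0 : (0 : ℝ) < y := by linarith
      simp only [hφ, smul_eq_mul]
      rw [hpow y hy0, min_eq_left (by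
        rw [one_pow, div_one]; exact one_le_pow₀ hy'.le), one_div, ← Real.rpow_neg hy0.le,
        ← Real.rpow_add hy0]
      congr 1
      ring
  exact h_int.lintegral_lt_top

lemma lintegral_trunc {t : ℝ} (ht : 0 < t) :
    ∫⁻ z : Pt n, trunc α t z = ENNReal.ofReal (t ^ (-(2 * α))) * truncC n α := by
  have h1 : ∀ z : Pt n, trunc α t z
      = ENNReal.ofReal (t ^ (-((n : ℝ) + 2 * α))) * trunc α 1 (t⁻¹ • z) := by
    intro z
    unfold trunc
    rw [← ENNReal.ofReal_mul (by positivity)]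
    congr 1
    rw [norm_smul, Real.norm_of_nonneg (by positivity : 0 ≤ t⁻¹),
      Real.mul_rpow (by positivity) (norm_nonneg z), Real.inv_rpow ht.le, Real.rpow_neg ht.le,
      one_pow, div_one, mul_pow, inv_pow]
    have : 0 < t ^ ((n : ℝ) + 2 * α) := by positivity
    rw [div_eq_mul_inv (min _ _), div_eq_mul_inv (min _ _), mul_inv, inv_inv,
      mul_comm (t ^ 2)⁻¹, ← div_eq_mul_inv (‖z‖ ^ 2)]
    field_simp
  simp_rw [h1]
  have hm := measurable_trunc (n := n) (α := α) 1
  rw [lintegral_const_mul _ (by fun_prop)]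
  have h2 : ∫⁻ z : Pt n, trunc α 1 (t⁻¹ • z) = ENNReal.ofReal (t ^ n) * truncC n α := by
    have h3 := Measure.map_addHaar_smul (volume : Measure (Pt n)) (inv_ne_zero ht.ne')
    have h4 := lintegral_map (μ := (volume : Measure (Pt n))) hm
      (measurable_const_smul (t⁻¹ : ℝ))
    rw [← h4, h3, lintegral_smul_measure, finrank_euclideanSpace_fin, inv_pow, inv_inv,
      abs_of_pos (by positivity)]
    rfl
  rw [h2, ← mul_assoc, ← ENNReal.ofReal_mul (by positivity), ← Real.rpow_natCast,
    ← Real.rpow_add ht]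
  congr 3
  ring

lemma volume_ball_eq (hn : n ≠ 0) (x : Pt n) {r : ℝ} (hr : 0 ≤ r) :
    volume (ball x r) = ENNReal.ofReal (r ^ n) * volume (ball (0 : Pt n) 1) := by
  have : Nontrivial (Pt n) := by
    have : Nonempty (Fin n) := ⟨⟨0, Nat.pos_of_ne_zero hn⟩⟩
    infer_instance
  rw [Measure.addHaar_ball _ x hr, finrank_euclideanSpace_fin]

/-- The energy of a function which is `1/t`-Lipschitz up to the truncation at height `√A` and
constant outside `W` is controlled by the volume of `W`. -/
lemma energy_le {u : Pt n → ℝ} {B W : Set (Pt n)} (hB : MeasurableSet B) (hW : MeasurableSet W)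
    {A t : ℝ} (hA : 0 ≤ A) (ht : 0 < t)
    (hu : ∀ x ∈ B, ∀ y ∈ B, |u x - u y| ^ 2 ≤ A * min 1 (‖x - y‖ ^ 2 / t ^ 2))
    (hWu : ∀ x y, x ∉ W → y ∉ W → u x = u y) :
    energy α u B ≤
      2 * (volume (B ∩ W) * (ENNReal.ofReal (A * t ^ (-(2 * α))) * truncC n α)) := by
  set T : Pt n → ℝ≥0∞ := fun z => ENNReal.ofReal A * trunc α t z with hT
  have hTm : Measurable T := (measurable_trunc t).const_mul _
  set M : ℝ≥0∞ := ENNReal.ofReal (A * t ^ (-(2 * α))) * truncC n α with hM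
  have hTM : ∫⁻ z, T z = M := by
    rw [hT, lintegral_const_mul _ (measurable_trunc t), lintegral_trunc ht, hM,
      ENNReal.ofReal_mul hA, mul_assoc]
  have hTx : ∀ x, ∫⁻ y, T (x - y) = M := fun x => by
    rw [lintegral_sub_left_eq_self, hTM]
  have hTy : ∀ y, ∫⁻ x, T (x - y) = M := fun y => by
    rw [lintegral_sub_right_eq_self, hTM]
  set I : Pt n → ℝ≥0∞ := W.indicator 1 with hI
  have hIm : Measurable I := measurable_one.indicator hW
  have hpt : ∀ x ∈ B, ∀ y ∈ B,
      ENNReal.ofReal (|u x - u y| ^ 2 / ‖x - y‖ ^ ((n : ℝ) + 2 * α))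
        ≤ I x * T (x - y) + I y * T (x - y) := by
    intro x hx y hy
    have h1 : ENNReal.ofReal (|u x - u y| ^ 2 / ‖x - y‖ ^ ((n : ℝ) + 2 * α)) ≤ T (x - y) := by
      simp only [hT, trunc]
      rw [← ENNReal.ofReal_mul hA, ← mul_div_assoc]
      gcongr
      exact hu x hx y hy
    by_cases hxW : x ∈ W
    · refine h1.trans (le_add_right ?_)
      simp [hI, hxW]
    by_cases hyW : y ∈ W
    · refine h1.trans (le_add_left ?_)
      simp [hI, hyW]
    simp [hWu x y hxW hyW]
  have hIB : ∫⁻ x in B, I x = volume (B ∩ W) := by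
    rw [hI, lintegral_indicator_one hW, Measure.restrict_apply hW, inter_comm]
  calc energy α u B ≤ ∫⁻ x in B, ∫⁻ y in B, (I x * T (x - y) + I y * T (x - y)) :=
        setLIntegral_mono' hB fun x hx => setLIntegral_mono' hB fun y hy => hpt x hx y hy
    _ = (∫⁻ x in B, ∫⁻ y in B, I x * T (x - y)) + ∫⁻ x in B, ∫⁻ y in B, I y * T (x - y) := by
        rw [← lintegral_add_left]
        · congr 1
          funext x
          rw [lintegral_add_left]
          exact (hTm.comp (measurable_const.sub measurable_id)).const_mul _
        · refine Measurable.lintegral_prod_right' (f := fun z : Pt n × Pt n =>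
            I z.1 * T (z.1 - z.2)) ?_
          exact (hIm.comp measurable_fst).mul (hTm.comp (measurable_fst.sub measurable_snd))
    _ = (∫⁻ x in B, ∫⁻ y in B, I x * T (x - y)) + ∫⁻ y in B, ∫⁻ x in B, I y * T (x - y) := by
        congr 1
        apply lintegral_lintegral_swap
        exact ((hIm.comp measurable_snd).mul
          (hTm.comp (measurable_fst.sub measurable_snd))).aemeasurable
    _ ≤ (∫⁻ x in B, I x * M) + ∫⁻ y in B, I y * M := by
        gcongr with x y
        · rw [lintegral_const_mul _ (by fun_prop : Measurable fun y => T (x - y))]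
          gcongr
          exact (setLIntegral_le_lintegral _ _).trans (hTx x).le
        · rw [lintegral_const_mul _ (by fun_prop : Measurable fun x => T (x - y))]
          gcongr
          exact (setLIntegral_le_lintegral _ _).trans (hTy y).le
    _ = 2 * (volume (B ∩ W) * M) := by
        rw [lintegral_mul_const _ hIm, hIB, two_mul]

/-- The lower bound for the energy of a function that drops from at least `1/2` to `0` near every
point of a finite set. -/
lemma energy_ge (hn : n ≠ 0) {v : Pt n → ℝ} {G : Finset (Pt n)} {B : Set (Pt n)} {ρ : ℝ}
    (hα : 0 < α) (hρ : 0 < ρ) (hB : ∀ p ∈ G, ball p (2 * ρ) ⊆ B)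
    (hdis : ∀ p ∈ G, ∀ q ∈ G, p ≠ q → ρ ≤ dist p q)
    (h1 : ∀ p ∈ G, ∀ x, dist x p < ρ / 2 → 1 / 2 ≤ v x)
    (h0 : ∀ p ∈ G, ∀ y, ρ ≤ dist y p → dist y p < 2 * ρ → v y = 0) :
    ENNReal.ofReal ((1 / 2) ^ n * (1 / 2) ^ n * (1 / 4) * 3 ^ (-((n : ℝ) + 2 * α))
        * (G.card * ρ ^ ((n : ℝ) - 2 * α)))
      * (volume (ball (0 : Pt n) 1) * volume (ball (0 : Pt n) 1)) ≤ energy α v B := by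
  have : Nontrivial (Pt n) := by
    have : Nonempty (Fin n) := ⟨⟨0, Nat.pos_of_ne_zero hn⟩⟩
    infer_instance
  obtain ⟨e, he⟩ := exists_norm_eq (Pt n) (zero_le_one (α := ℝ))
  set V := volume (ball (0 : Pt n) 1) with hV
  set a : ℝ := 1 / 4 / (3 * ρ) ^ ((n : ℝ) + 2 * α) with ha
  have ha0 : 0 ≤ a := by positivity
  have hρ2 : volume (ball (0 : Pt n) (ρ / 2)) = ENNReal.ofReal ((ρ / 2) ^ n) * V :=
    volume_ball_eq hn _ (by positivity)
  have hvol : ∀ x : Pt n, volume (ball x (ρ / 2)) = ENNReal.ofReal ((ρ / 2) ^ n) * V :=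
    fun x => volume_ball_eq hn _ (by positivity)
  have hinner : ∀ p ∈ G, ∀ x ∈ ball p (ρ / 2), ENNReal.ofReal a * (ENNReal.ofReal ((ρ / 2) ^ n) * V)
      ≤ ∫⁻ y in B, ENNReal.ofReal (|v x - v y| ^ 2 / ‖x - y‖ ^ ((n : ℝ) + 2 * α)) := by
    intro p hp x hx
    rw [mem_ball] at hx
    -- a ball inside the annulus `ρ < |y - p| < 2ρ`
    set c : Pt n := p + (3 * ρ / 2) • e with hc
    have hcp : dist c p = 3 * ρ / 2 := by
      rw [hc, dist_eq_norm, add_sub_cancel_left, norm_smul, he, mul_one,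
        Real.norm_of_nonneg (by positivity)]
    have hy : ∀ y ∈ ball c (ρ / 2), ρ ≤ dist y p ∧ dist y p < 2 * ρ := by
      intro y hy
      rw [mem_ball] at hy
      have h2 := dist_triangle y c p
      have h3 := dist_triangle_left c p y
      constructor <;> linarith
    have hsub : ball c (ρ / 2) ⊆ B := fun y h => hB p hp (hy y h).2
    calc ENNReal.ofReal a * (ENNReal.ofReal ((ρ / 2) ^ n) * V)
        = ∫⁻ _y in ball c (ρ / 2), ENNReal.ofReal a := by rw [setLIntegral_const, hvol]
      _ ≤ ∫⁻ y in ball c (ρ / 2),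
            ENNReal.ofReal (|v x - v y| ^ 2 / ‖x - y‖ ^ ((n : ℝ) + 2 * α)) := by
          refine setLIntegral_mono' measurableSet_ball fun y hyc => ?_
          have h2 := hy y hyc
          have h3 := h1 p hp x hx
          rw [h0 p hp y h2.1 h2.2, sub_zero, abs_of_nonneg (by linarith), ← dist_eq_norm]
          have h4 : dist x y ≤ 3 * ρ := by
            have := dist_triangle_right x y p
            linarith
          have h5 : 0 < dist x y := by
            have := dist_triangle_left y p x
            rw [dist_comm x y] at *
            linarith
          rw [ha]
          gcongr
          nlinarith
      _ ≤ _ := lintegral_mono_set hsub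
  have hdisj : (G : Set (Pt n)).PairwiseDisjoint fun p => ball p (ρ / 2) := by
    intro p hp q hq hpq
    apply ball_disjoint_ball
    have := hdis p hp q hq hpq
    linarith
  have hsubU : (⋃ p ∈ G, ball p (ρ / 2)) ⊆ B := by
    simp only [iUnion_subset_iff]
    intro p hp
    exact (ball_subset_ball (by linarith)).trans (hB p hp)
  calc _ = G.card * (ENNReal.ofReal a * (ENNReal.ofReal ((ρ / 2) ^ n) * V)
          * (ENNReal.ofReal ((ρ / 2) ^ n) * V)) := by
        have key : (1 / 2) ^ n * (1 / 2) ^ n * (1 / 4) * 3 ^ (-((n : ℝ) + 2 * α))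
            * (G.card * ρ ^ ((n : ℝ) - 2 * α)) = G.card * (a * (ρ / 2) ^ n * (ρ / 2) ^ n) := by
          rw [ha, Real.mul_rpow (by norm_num) hρ.le, Real.rpow_neg (by norm_num), div_pow ρ,
            ← Real.rpow_natCast ρ n,
            show (n : ℝ) - 2 * α = n + n - (n + 2 * α) by ring, Real.rpow_sub hρ,
            Real.rpow_add hρ n n, one_div_pow]
          field_simp
        rw [key, ENNReal.ofReal_mul (by positivity), ENNReal.ofReal_mul (by positivity),
          ENNReal.ofReal_mul (by positivity), ENNReal.ofReal_natCast]
        ring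
    _ = ∑ p ∈ G, ∫⁻ _x in ball p (ρ / 2),
          ENNReal.ofReal a * (ENNReal.ofReal ((ρ / 2) ^ n) * V) := by
        simp_rw [setLIntegral_const, hvol]
        rw [Finset.sum_const, nsmul_eq_mul]
    _ ≤ ∑ p ∈ G, ∫⁻ x in ball p (ρ / 2), ∫⁻ y in B,
          ENNReal.ofReal (|v x - v y| ^ 2 / ‖x - y‖ ^ ((n : ℝ) + 2 * α)) := by
        refine Finset.sum_le_sum fun p hp => ?_
        exact setLIntegral_mono' measurableSet_ball fun x hx => hinner p hp x hx
    _ = ∫⁻ x in ⋃ p ∈ G, ball p (ρ / 2), ∫⁻ y in B,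
          ENNReal.ofReal (|v x - v y| ^ 2 / ‖x - y‖ ^ ((n : ℝ) + 2 * α)) := by
        rw [lintegral_biUnion_finset hdisj fun p _ => measurableSet_ball]
    _ ≤ energy α v B := lintegral_mono_set hsubU

lemma le_Qnorm (u : Pt n → ℝ) (x : Pt n) {r : ℝ} (hr : 0 < r) :
    (ENNReal.ofReal (r ^ (2 * α - (n : ℝ))) * energy α u (ball x r)) ^ (1 / 2 : ℝ) ≤ Qnorm α u :=
  le_iSup_of_le x (le_iSup_of_le r (le_iSup_of_le hr le_rfl))

/-- The tent function of height one and slope `1/s` around a finite set. -/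
def tent (G : Finset (Pt n)) (s : ℝ) (x : Pt n) : ℝ := max 0 (1 - infDist x (G : Set (Pt n)) / s)

lemma tent_eq_zero {G : Finset (Pt n)} (hG : G.Nonempty) {s : ℝ} (hs : 0 < s) {x : Pt n}
    (h : ∀ p ∈ G, s ≤ dist x p) : tent G s x = 0 := by
  apply max_eq_left
  have : s ≤ infDist x (G : Set (Pt n)) :=
    (le_infDist (by exact_mod_cast hG)).2 fun {p} hp => h p hp
  have := (one_le_div hs).2 this
  linarith

lemma tent_ge {G : Finset (Pt n)} {s : ℝ} (hs : 0 < s) {x p : Pt n} (hp : p ∈ G)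
    (h : dist x p ≤ s / 2) : 1 / 2 ≤ tent G s x := by
  refine le_trans ?_ (le_max_right _ _)
  have h1 : infDist x (G : Set (Pt n)) ≤ s / 2 :=
    (infDist_le_dist_of_mem (by exact_mod_cast hp)).trans h
  have h2 : infDist x (G : Set (Pt n)) / s ≤ 1 / 2 := by
    rw [div_le_iff₀ hs]; linarith
  linarith

lemma tent_mem {G : Finset (Pt n)} {s : ℝ} (hs : 0 < s) (x : Pt n) :
    0 ≤ tent G s x ∧ tent G s x ≤ 1 := by
  refine ⟨le_max_left _ _, max_le zero_le_one ?_⟩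
  have : 0 ≤ infDist x (G : Set (Pt n)) / s := div_nonneg infDist_nonneg hs.le
  linarith

lemma tent_sub_le {G : Finset (Pt n)} {s : ℝ} (hs : 0 < s) (x y : Pt n) :
    |tent G s x - tent G s y| ≤ ‖x - y‖ / s := by
  have h1 : |infDist x (G : Set (Pt n)) - infDist y (G : Set (Pt n))| ≤ ‖x - y‖ := by
    have := (lipschitz_infDist_pt (G : Set (Pt n))).dist_le_mul x y
    rwa [Real.dist_eq, NNReal.coe_one, one_mul, dist_eq_norm] at this
  calc |tent G s x - tent G s y|
      ≤ |(1 - infDist x (G : Set (Pt n)) / s) - (1 - infDist y (G : Set (Pt n)) / s)| := by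
        unfold tent
        rw [max_comm 0, max_comm 0]
        exact abs_max_sub_max_le_abs _ _ _
    _ = |infDist x (G : Set (Pt n)) - infDist y (G : Set (Pt n))| / s := by
        rw [← abs_of_pos hs, ← abs_div, abs_of_pos hs, ← abs_neg]
        congr 1
        ring
    _ ≤ _ := by gcongr

lemma continuous_tent (G : Finset (Pt n)) (s : ℝ) : Continuous (tent G s) := by
  have := continuous_infDist_pt (G : Set (Pt n))
  unfold tent
  fun_prop

lemma ofReal_collect {a b d : ℝ} (ha : 0 ≤ a) (hb : 0 ≤ b) (V K : ℝ≥0∞) :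
    ENNReal.ofReal a * (2 * (ENNReal.ofReal b * V * (ENNReal.ofReal d * K)))
      = ENNReal.ofReal (a * 2 * b * d) * (V * K) := by
  rw [ENNReal.ofReal_mul (by positivity), ENNReal.ofReal_mul (by positivity),
    ENNReal.ofReal_mul ha, ENNReal.ofReal_ofNat]
  ring

open Classical in
/-- A packing condition on `G` at all scales above `s` bounds the `Q_α`-norm of its tent
function. -/
lemma Qnorm_tent_le (hn : n ≠ 0) {G : Finset (Pt n)} (hG : G.Nonempty) {s C : ℝ} (hs : 0 < s) (hα : 0 < α)
    (hC : 1 ≤ C)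
    (hpack : ∀ (x : Pt n) (r : ℝ), s ≤ r →
      ((G.filter fun p => p ∈ ball x (2 * r)).card : ℝ) * (s / r) ^ ((n : ℝ) - 2 * α) ≤ C) :
    Qnorm α (tent G s) ≤
      (ENNReal.ofReal (8 * C) * (volume (ball (0 : Pt n) 1) * truncC n α)) ^ (1 / 2 : ℝ) := by
  set V := volume (ball (0 : Pt n) 1) with hV
  refine iSup_le fun x => iSup_le fun r => iSup_le fun hr => ?_
  apply ENNReal.rpow_le_rpow _ (by norm_num)
  change ENNReal.ofReal (r ^ (2 * α - (n : ℝ))) * energy α (tent G s) (ball x r) ≤ _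
  rcases le_total r s with hrs | hrs
  · have h1 : energy α (tent G s) (ball x r) ≤ 2 * (volume (ball x r ∩ univ) *
        (ENNReal.ofReal (4 * (r ^ 2 / s ^ 2) * (2 * r) ^ (-(2 * α))) * truncC n α)) := by
      refine energy_le measurableSet_ball MeasurableSet.univ (by positivity) (by positivity) ?_ ?_
      · intro y hy z hz
        have hyz : ‖y - z‖ ≤ 2 * r := by
          rw [← dist_eq_norm]
          have := dist_triangle_right y z x
          rw [mem_ball] at hy hz
          linarith
        rw [min_eq_right (by rw [div_le_one (by positivity)]; gcongr)]
        calc |tent G s y - tent G s z| ^ 2 ≤ (‖y - z‖ / s) ^ 2 := by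
              gcongr; exact tent_sub_le hs y z
          _ = _ := by field_simp; ring
      · intro y z hy; exact absurd (mem_univ y) hy
    rw [inter_univ, volume_ball_eq hn x hr.le, ← hV] at h1
    calc _ ≤ ENNReal.ofReal (r ^ (2 * α - (n : ℝ))) * (2 * (ENNReal.ofReal (r ^ n) * V *
        (ENNReal.ofReal (4 * (r ^ 2 / s ^ 2) * (2 * r) ^ (-(2 * α))) * truncC n α))) := by gcongr
      _ = ENNReal.ofReal (r ^ (2 * α - (n : ℝ)) * 2 * r ^ n *
            (4 * (r ^ 2 / s ^ 2) * (2 * r) ^ (-(2 * α)))) * (V * truncC n α) := by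
          exact ofReal_collect (by positivity) (by positivity) _ _
      _ ≤ _ := by
          refine mul_le_mul_left (ENNReal.ofReal_le_ofReal ?_) _
          have e1 : r ^ (2 * α - (n : ℝ)) * r ^ n * r ^ (-(2 * α)) = 1 := by
            rw [← Real.rpow_natCast, ← Real.rpow_add hr, ← Real.rpow_add hr]
            ring_nf
            exact Real.rpow_zero r
          have e2 : (2 : ℝ) ^ (-(2 * α)) ≤ 1 :=
            Real.rpow_le_one_of_one_le_of_nonpos (by norm_num) (by linarith)
          have e3 : r ^ 2 / s ^ 2 ≤ 1 := by
            rw [div_le_one (by positivity)]; gcongr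
          calc _ = 8 * ((r ^ (2 * α - (n : ℝ)) * r ^ n * r ^ (-(2 * α))) *
                ((r ^ 2 / s ^ 2) * (2 : ℝ) ^ (-(2 * α)))) := by
                rw [Real.mul_rpow (by norm_num) hr.le]; ring
            _ ≤ 8 * (1 * (1 * 1)) := by rw [e1]; gcongr
            _ ≤ 8 * C := by linarith
  · set W : Set (Pt n) := ⋃ p ∈ G, ball p s with hW
    have hWm : MeasurableSet W := (isOpen_biUnion fun p _ => isOpen_ball).measurableSet
    have hz : ∀ y, y ∉ W → tent G s y = 0 := by
      intro y hy
      refine tent_eq_zero hG hs fun p hp => ?_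
      by_contra h
      exact hy (mem_biUnion hp (mem_ball.2 (not_le.1 h)))
    have h1 : energy α (tent G s) (ball x r) ≤ 2 * (volume (ball x r ∩ W) *
        (ENNReal.ofReal (1 * s ^ (-(2 * α))) * truncC n α)) := by
      refine energy_le measurableSet_ball hWm zero_le_one hs ?_ ?_
      · intro y _ z _
        rw [one_mul]
        apply le_min
        · have a1 := tent_mem (G := G) hs y
          have a2 := tent_mem (G := G) hs z
          apply pow_le_one₀ (abs_nonneg _)
          rw [abs_le]
          constructor <;> linarith
        · rw [← div_pow]
          gcongr
          exact tent_sub_le hs y z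
      · intro y z hy hz'
        rw [hz y hy, hz z hz']
    set N := (G.filter fun p => p ∈ ball x (2 * r)).card with hN
    have h2 : volume (ball x r ∩ W) ≤ ENNReal.ofReal (N * s ^ n) * V := by
      calc volume (ball x r ∩ W)
          ≤ volume (⋃ p ∈ G.filter fun p => p ∈ ball x (2 * r), ball p s) := by
            apply measure_mono
            rintro y ⟨hy, hyW⟩
            simp only [hW, mem_iUnion] at hyW
            obtain ⟨p, hp, hyp⟩ := hyW
            refine mem_biUnion (Finset.mem_filter.2 ⟨hp, ?_⟩) hyp
            rw [mem_ball] at *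
            have := dist_triangle_left p x y
            linarith
        _ ≤ ∑ p ∈ G.filter fun p => p ∈ ball x (2 * r), volume (ball p s) :=
            measure_biUnion_finset_le _ _
        _ = _ := by
            simp_rw [volume_ball_eq hn _ hs.le]
            rw [Finset.sum_const, nsmul_eq_mul, ENNReal.ofReal_mul (by positivity),
              ENNReal.ofReal_natCast, mul_assoc]
    calc _ ≤ ENNReal.ofReal (r ^ (2 * α - (n : ℝ))) * (2 * (ENNReal.ofReal (N * s ^ n) * V *
        (ENNReal.ofReal (1 * s ^ (-(2 * α))) * truncC n α))) := by
          gcongr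
          exact h1.trans (by gcongr)
      _ = ENNReal.ofReal (r ^ (2 * α - (n : ℝ)) * 2 * (N * s ^ n) *
            (1 * s ^ (-(2 * α)))) * (V * truncC n α) := by
          exact ofReal_collect (by positivity) (by positivity) _ _
      _ ≤ _ := by
          refine mul_le_mul_left (ENNReal.ofReal_le_ofReal ?_) _
          have hp := hpack x r hrs
          have hp' : 0 ≤ (N : ℝ) * (s / r) ^ ((n : ℝ) - 2 * α) := by positivity
          calc _ = 2 * ((N : ℝ) * (s / r) ^ ((n : ℝ) - 2 * α)) := by
                rw [Real.div_rpow hs.le hr.le, ← neg_sub (n : ℝ) (2 * α), Real.rpow_neg hr.le,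
                  Real.rpow_sub hs, Real.rpow_neg hs.le, Real.rpow_natCast]
                field_simp
            _ ≤ 8 * C := by linarith

end Energy

/-! ### The stretches centred at the grid points -/

namespace Par

variable {l τ σ : ℝ} {n : ℕ}

lemma grid_mono {k m : ℕ} (h : k ≤ m) : grid n l τ k ⊆ grid n l τ m := fun _ hx =>
  mem_grid.2 fun i => mid_mono h (mem_grid.1 hx i)

lemma zero_mem_grid (k : ℕ) : (0 : Pt n) ∈ grid n l τ k :=
  mem_grid.2 fun _ => zero_mem_mid l τ k

/-- The first generation in which `p` appears. -/
def level (l τ : ℝ) (p : Pt n) : ℕ := sInf {k | p ∈ grid n l τ k}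

lemma mem_grid_level {p : Pt n} (hp : p ∈ gridSet n l τ) : p ∈ grid n l τ (level l τ p) :=
  Nat.sInf_mem (s := {k | p ∈ grid n l τ k}) hp

lemma level_eq {p : Pt n} {k : ℕ} (hp : p ∈ grid n l τ (k + 1)) (hp' : p ∉ grid n l τ k) :
    level l τ p = k + 1 := by
  apply le_antisymm
  · exact Nat.sInf_le hp
  · by_contra h
    exact hp' (grid_mono (by omega) (mem_grid_level ⟨k + 1, hp⟩))

lemma grid_dist (P : Par l τ σ) {k m : ℕ} {p q : Pt n} (hp : p ∈ grid n l τ k)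
    (hq : q ∈ grid n l τ m) (hpq : p ≠ q) : (1 - 2 * l) * τ * l ^ k ≤ dist p q := by
  obtain ⟨i, hi⟩ := P.grid_sep hp hq hpq
  exact hi.trans (abs_sub_le_dist p q i)

/-- The separated family of all grid points; a point of level `k` carries a radius equal to a
quarter of the separation of the points of that level. -/
def family (n : ℕ) (P : Par l τ σ) (hτ : τ ≤ 1) : SepFamily n where
  S := gridSet n l τ
  rad p := (1 - 2 * l) * τ / 4 * l ^ level l τ p
  pos p _ := by
    have := P.g0
    have := P.l0
    positivity
  le_one p _ := by
    have h1 := P.g0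
    have h2 := P.l0
    have h3 := P.l1
    have h4 := P.t0
    have h5 : l ^ level l τ p ≤ 1 := pow_le_one₀ h2.le (by linarith)
    have h6 : (1 - 2 * l) * τ / 4 ≤ 1 := by nlinarith
    calc _ ≤ (1 : ℝ) * 1 := by gcongr
      _ = 1 := one_mul 1
  sep p hp q hq hpq := by
    have h1 := P.grid_dist (mem_grid_level hp) (mem_grid_level hq) hpq
    have h2 := P.grid_dist (mem_grid_level hq) (mem_grid_level hp) hpq.symm
    rw [dist_comm] at h2
    linarith

lemma two_pow_le_card_sdiff (hn : n ≠ 0) (P : Par l τ σ) (k : ℕ) :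
    2 ^ (n * (k + 1)) ≤ (grid n l τ (k + 1) \ grid n l τ k).card := by
  rw [Finset.card_sdiff_of_subset (grid_mono (Nat.le_succ k)), card_grid, card_grid]
  have h1 := P.card_mid k
  have h2 := P.card_mid (k + 1)
  have h3 : (mid l τ (k + 1)).card = 2 ^ (k + 1) + (mid l τ k).card := by
    rw [pow_succ 2 (k + 1)] at h2
    omega
  rw [h3, mul_comm n, pow_mul]
  have := pow_add_pow_le (x := 2 ^ (k + 1)) (y := (mid l τ k).card) (Nat.zero_le _)
    (Nat.zero_le _) hn
  omega

/-! ### Unboundedness of the composition operator -/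

open Classical in
/-- The packing estimate for the grid of generation `k` at scales above `s`, where `s` is chosen so
that `s ^ β` is comparable with the inverse of the number of grid points. -/
lemma packing (P : Par l τ σ) {β : ℝ} (hβ : 0 < β) (hβσ : β ≤ n * σ) {k : ℕ} {s : ℝ} (hs : 0 < s)
    (hsβ : s ^ β = (l ^ k) ^ (n * σ)) (x : Pt n) {r : ℝ} (hr : s ≤ r) :
    (((grid n l τ k).filter fun p => p ∈ ball x (2 * r)).card : ℝ) * (s / r) ^ β
      ≤ 1 + 2 ^ n * (4 / ((1 - 2 * l) * τ)) ^ (n * σ) + 2 ^ n := by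
  have hg := P.g0
  have hl := P.l0
  set g := (1 - 2 * l) * τ with hgdef
  have hr0 : 0 < r := hs.trans_le hr
  set N : ℝ := (((grid n l τ k).filter fun p => p ∈ ball x (2 * r)).card : ℝ) with hN
  have hA : 0 ≤ (2 : ℝ) ^ n * (4 / g) ^ (n * σ) := by positivity
  rcases le_total r 1 with hr1 | hr1
  · have h1 : N ≤ (max 1 (2 * (2 * (2 * r) / (g * l ^ k)) ^ σ)) ^ n := by
      refine le_trans ?_ (P.grid_count k (x - diag n (2 * r)) (L := 2 * (2 * r)) (by positivity))
      rw [hN]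
      gcongr
      exact fun _ h => ball_subset_cube x (2 * r) h
    have h2 : (max 1 (2 * (2 * (2 * r) / (g * l ^ k)) ^ σ)) ^ n
        ≤ 1 + 2 ^ n * (4 / g) ^ (n * σ) * r ^ (n * σ) / (l ^ k) ^ (n * σ) := by
      have e : (2 * (2 * (2 * r) / (g * l ^ k)) ^ σ) ^ n
          = 2 ^ n * (4 / g) ^ (n * σ) * r ^ (n * σ) / (l ^ k) ^ (n * σ) := by
        rw [mul_pow, ← Real.rpow_mul_natCast (by positivity), mul_comm σ,
          show 2 * (2 * r) / (g * l ^ k) = 4 / g * r / l ^ k by field_simp; ring,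
          Real.div_rpow (by positivity) (by positivity), Real.mul_rpow (by positivity) hr0.le]
        ring
      rw [← e]
      rcases le_total 1 (2 * (2 * (2 * r) / (g * l ^ k)) ^ σ) with h | h
      · rw [max_eq_right h]; linarith
      · rw [max_eq_left h, one_pow]
        have : 0 ≤ (2 * (2 * (2 * r) / (g * l ^ k)) ^ σ) ^ n := by positivity
        linarith
    have h3 : (s / r) ^ β ≤ 1 :=
      Real.rpow_le_one (by positivity) ((div_le_one hr0).2 hr) hβ.le
    have h4 : r ^ (n * σ) / r ^ β ≤ 1 := by
      rw [← Real.rpow_sub hr0]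
      exact Real.rpow_le_one hr0.le hr1 (by linarith)
    have h5 : 0 < (l ^ k : ℝ) ^ (n * σ) := by positivity
    calc N * (s / r) ^ β
        ≤ (1 + 2 ^ n * (4 / g) ^ (n * σ) * r ^ (n * σ) / (l ^ k) ^ (n * σ)) * (s / r) ^ β := by
          gcongr; exact h1.trans h2
      _ = (s / r) ^ β + 2 ^ n * (4 / g) ^ (n * σ) * (r ^ (n * σ) / r ^ β) := by
          rw [add_mul, one_mul, Real.div_rpow hs.le hr0.le, hsβ]
          field_simp
      _ ≤ 1 + 2 ^ n * (4 / g) ^ (n * σ) * 1 := by gcongr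
      _ ≤ _ := by
          have : (0 : ℝ) ≤ 2 ^ n := by positivity
          linarith
  · have h1 : N ≤ 2 ^ (n * (k + 1)) := by
      have := (Finset.card_filter_le (grid n l τ k) fun p => p ∈ ball x (2 * r)).trans
        (P.card_le_two_pow k)
      rw [hN]
      exact_mod_cast this
    have h2 : (s / r) ^ β ≤ (1 / 2) ^ (n * k) := by
      calc (s / r) ^ β ≤ s ^ β := by
            gcongr
            exact div_le_self hs.le hr1
        _ = (1 / 2) ^ (n * k) := by
            rw [hsβ, mul_comm, Real.rpow_mul_natCast (by positivity), P.pow_rpow, ← pow_mul,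
              mul_comm]
    calc N * (s / r) ^ β ≤ 2 ^ (n * (k + 1)) * (1 / 2) ^ (n * k) := by gcongr
      _ = 2 ^ n := by
          rw [mul_add, mul_one, pow_add, mul_comm ((2 : ℝ) ^ (n * k)), mul_assoc, ← mul_pow]
          norm_num
      _ ≤ _ := by linarith

/-- Composition with the stretches widens each spike of the tent function around a point of level
exactly `k + 1` from radius `s` to radius `√(s ε)`, where `ε` is the radius of the stretch. -/
lemma energy_comp_ge (hn : n ≠ 0) (P : Par l τ σ) (hτ : τ * (2 * n) ≤ 1) (hτ1 : τ ≤ 1) {α : ℝ}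
    (hα : 0 < α) {k : ℕ} {s ε : ℝ} (hs : 0 < s) (hε : ε = (1 - 2 * l) * τ / 4 * l ^ (k + 1))
    (hsε : s ≤ ε / 4) :
    ENNReal.ofReal ((1 / 2) ^ n * (1 / 2) ^ n * (1 / 4) * 3 ^ (-((n : ℝ) + 2 * α))
        * ((grid n l τ (k + 1) \ grid n l τ k).card * √(s * ε) ^ ((n : ℝ) - 2 * α)))
      * (volume (ball (0 : Pt n) 1) * volume (ball (0 : Pt n) 1))
      ≤ energy α (tent (grid n l τ (k + 1)) s ∘ (family n P hτ1).map) (ball 0 2) := by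
  have hg := P.g0
  have hl := P.l0
  have hε0 : 0 < ε := by linarith
  set ρ := √(s * ε) with hρdef
  have hρ : 0 < ρ := Real.sqrt_pos.2 (by positivity)
  have hρ2 : ρ ^ 2 = s * ε := Real.sq_sqrt (by positivity)
  have hρε : 2 * ρ ≤ ε := by
    apply abs_le_of_sq_le_sq' _ hε0.le |>.2
    nlinarith
  have hmem : ∀ p ∈ grid n l τ (k + 1) \ grid n l τ k, p ∈ grid n l τ (k + 1) := fun p hp =>
    (Finset.mem_sdiff.1 hp).1
  have hrad : ∀ p ∈ grid n l τ (k + 1) \ grid n l τ k, (family n P hτ1).rad p = ε := by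
    intro p hp
    rw [Finset.mem_sdiff] at hp
    change (1 - 2 * l) * τ / 4 * l ^ level l τ p = ε
    rw [level_eq hp.1 hp.2, hε]
  have hsep : ∀ p ∈ grid n l τ (k + 1), ∀ q ∈ grid n l τ (k + 1), p ≠ q → 4 * ε ≤ dist p q := by
    intro p hp q hq hpq
    have := P.grid_dist hp hq hpq
    rw [hε]
    linarith
  -- inside the ball of radius `ε` the distance to the centre is squared and divided by `ε`
  have hmap : ∀ p ∈ grid n l τ (k + 1) \ grid n l τ k, ∀ x, dist x p < ε →
      dist ((family n P hτ1).map x) p = dist x p ^ 2 / ε := by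
    intro p hp x hx
    rw [(family n P hτ1).map_of_mem ⟨k + 1, hmem p hp⟩ (by rw [hrad p hp]; exact hx), hrad p hp,
      stretch, dist_eq_norm, add_sub_cancel_left, ← dist_eq_norm,
      min_eq_right ((div_le_one hε0).2 hx.le), norm_smul, ← dist_eq_norm,
      Real.norm_of_nonneg (by positivity)]
    ring
  have hε1 : ε ≤ 1 := by
    have h3 := P.l1
    have h4 := P.t0
    have h5 : l ^ (k + 1) ≤ 1 := pow_le_one₀ hl.le (by linarith)
    have h6 : (1 - 2 * l) * τ / 4 ≤ 1 := by nlinarith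
    calc ε = _ := hε
      _ ≤ (1 : ℝ) * 1 := by gcongr
      _ = 1 := one_mul 1
  refine energy_ge hn hα hρ ?_ ?_ ?_ ?_
  · intro p hp
    apply ball_subset_ball'
    have := P.grid_norm hτ (hmem p hp)
    rw [dist_zero_right]
    linarith
  · intro p hp q hq hpq
    have := hsep p (hmem p hp) q (hmem q hq) hpq
    linarith
  · intro p hp x hx
    apply tent_ge hs (hmem p hp)
    rw [hmap p hp x (by linarith), div_le_iff₀ hε0]
    have : dist x p ^ 2 ≤ (ρ / 2) ^ 2 := by gcongr
    nlinarith
  · intro p hp y hy1 hy2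
    have hyε : dist y p < ε := by linarith
    have hm := hmap p hp y hyε
    apply tent_eq_zero ⟨p, hmem p hp⟩ hs
    intro q hq
    by_cases hpq : p = q
    · subst hpq
      rw [hm, le_div_iff₀ hε0, ← hρ2]
      gcongr
    · have h1 := hsep p (hmem p hp) q hq hpq
      have h2 := dist_triangle_left p q ((family n P hτ1).map y)
      have h3 : dist ((family n P hτ1).map y) p ≤ ε := by
        rw [hm, div_le_iff₀ hε0]
        have : dist y p ^ 2 ≤ ε ^ 2 := by gcongr
        nlinarith
      linarith

lemma Qnorm_tent_pos (hn : n ≠ 0) (P : Par l τ σ) {α : ℝ}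
    (hα : 0 < α) {k : ℕ} {s : ℝ} (hs : 0 < s) (hs1 : s ≤ 1)
    (hsε : 3 * s ≤ (1 - 2 * l) * τ * l ^ k) :
    0 < Qnorm α (tent (grid n l τ k) s) := by
  refine lt_of_lt_of_le ?_ (le_Qnorm _ (0 : Pt n) two_pos)
  have h := energy_ge (v := tent (grid n l τ k) s) (G := {0}) (B := ball (0 : Pt n) 2) hn hα hs
    ?_ ?_ ?_ ?_
  · have hV : 0 < volume (ball (0 : Pt n) 1) := measure_ball_pos _ _ one_pos
    have hpos : 0 < energy α (tent (grid n l τ k) s) (ball (0 : Pt n) 2) := by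
      refine lt_of_lt_of_le ?_ h
      refine ENNReal.mul_pos (ENNReal.ofReal_pos.2 ?_).ne' (ENNReal.mul_pos hV.ne' hV.ne').ne'
      rw [Finset.card_singleton]
      positivity
    refine ENNReal.rpow_pos_of_nonneg (ENNReal.mul_pos ?_ hpos.ne') (by norm_num)
    exact (ENNReal.ofReal_pos.2 (by positivity)).ne'
  · intro p hp
    rw [Finset.mem_singleton.1 hp]
    exact ball_subset_ball (by linarith)
  · intro p hp q hq hpq
    rw [Finset.mem_singleton] at hp hq
    exact absurd (hp.trans hq.symm) hpq
  · intro p hp x hx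
    rw [Finset.mem_singleton] at hp
    subst hp
    exact tent_ge hs (zero_mem_grid k) hx.le
  · intro p hp y hy1 hy2
    rw [Finset.mem_singleton] at hp
    subst hp
    apply tent_eq_zero ⟨0, zero_mem_grid k⟩ hs
    intro q hq
    by_cases h0 : (0 : Pt n) = q
    · rw [← h0]; exact hy1
    · have h1 := P.grid_dist (zero_mem_grid k) hq h0
      have h2 := dist_triangle_left (0 : Pt n) q y
      linarith

lemma unbounded (hn : n ≠ 0) (P : Par l τ σ) (hτ : τ * (2 * n) ≤ 1) (hτ1 : τ ≤ 1) {α : ℝ}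
    (hα0 : 0 < α) (hα1 : α < 1) (hβ : 0 < (n : ℝ) - 2 * α) (hβσ : (n : ℝ) - 2 * α < n * σ)
    (C : ℝ) :
    ∃ u : Pt n → ℝ, MemQ α u ∧ 0 < Qnorm α u ∧
      ENNReal.ofReal C * Qnorm α u < Qnorm α (u ∘ (family n P hτ1).map) := by
  classical
  have hg := P.g0
  have hl := P.l0
  have hl1 := P.l1
  set β : ℝ := (n : ℝ) - 2 * α with hβdef
  set g := (1 - 2 * l) * τ with hgdef
  set d : ℝ := n * σ with hd
  set V := volume (ball (0 : Pt n) 1) with hV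
  have hV0 : 0 < V := measure_ball_pos _ _ one_pos
  have hVtop : V < ⊤ := measure_ball_lt_top
  set lam : ℕ → ℝ := fun k => l ^ (k + 1) with hlam
  have hlam0 : ∀ k, 0 < lam k := fun k => by positivity
  have hlamlim : Tendsto lam atTop (nhds 0) :=
    (tendsto_pow_atTop_nhds_zero_of_lt_one hl.le (by linarith)).comp (tendsto_add_atTop_nat 1)
  set s : ℕ → ℝ := fun k => lam k ^ (d / β) with hsdef
  have hs0 : ∀ k, 0 < s k := fun k => Real.rpow_pos_of_pos (hlam0 k) _
  have hsβ : ∀ k, s k ^ β = lam k ^ d := fun k => by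
    rw [hsdef, ← Real.rpow_mul (hlam0 k).le, div_mul_cancel₀ _ hβ.ne']
  set C₂ : ℝ := 1 + 2 ^ n * (4 / g) ^ d + 2 ^ n with hC₂
  have hC₂1 : 1 ≤ C₂ := by
    have : 0 ≤ 2 ^ n * (4 / g) ^ d + 2 ^ n := by positivity
    linarith
  set M : ℝ≥0∞ := (ENNReal.ofReal (8 * C₂) * (V * truncC n α)) ^ (1 / 2 : ℝ) with hM
  have hMtop : M < ⊤ := by
    refine ENNReal.rpow_lt_top_of_nonneg (by norm_num) (ENNReal.mul_lt_top ENNReal.ofReal_lt_top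
      (ENNReal.mul_lt_top hVtop (truncC_lt_top hn hα0 hα1))).ne
  have hupper : ∀ k, Qnorm α (tent (grid n l τ (k + 1)) (s k)) ≤ M := fun k =>
    Qnorm_tent_le hn ⟨0, zero_mem_grid _⟩ (hs0 k) hα0 hC₂1 fun x r hr =>
      P.packing hβ hβσ.le (hs0 k) (hsβ k) x hr
  -- the scale `s` is eventually much smaller than the radius of the stretch
  have hsmall : ∀ᶠ k in atTop, s k ≤ g / 4 * lam k / 4 := by
    have h1 : Tendsto (fun k => lam k ^ (d / β - 1)) atTop (nhds 0) := by
      have := hlamlim.rpow_const (p := d / β - 1) (Or.inr (by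
        rw [sub_nonneg, one_le_div hβ]; exact hβσ.le))
      rwa [Real.zero_rpow (by rw [sub_ne_zero]; exact ((one_lt_div hβ).2 hβσ).ne')] at this
    filter_upwards [h1.eventually (gt_mem_nhds (by positivity : 0 < g / 16))] with k hk
    rw [Real.rpow_sub (hlam0 k), Real.rpow_one, div_lt_iff₀ (hlam0 k)] at hk
    simp only [hsdef]
    linarith
  set c : ℝ := (1 / 2) ^ n * (1 / 2) ^ n * (1 / 4) * 3 ^ (-((n : ℝ) + 2 * α)) with hc
  have hc0 : 0 < c := by positivity
  set X : ℕ → ℝ := fun k => (g / 4) ^ (β / 2) * (lam k)⁻¹ ^ ((d - β) / 2) with hX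
  have hXlim : Tendsto X atTop atTop := by
    refine Tendsto.const_mul_atTop (by positivity) ?_
    refine (_root_.tendsto_rpow_atTop (by linarith)).comp ?_
    exact (tendsto_nhdsWithin_iff.2 ⟨hlamlim, Eventually.of_forall hlam0⟩).inv_tendsto_nhdsGT_zero
  have hcardX : ∀ k, X k ≤ (grid n l τ (k + 1) \ grid n l τ k).card *
      √(s k * (g / 4 * lam k)) ^ β := by
    intro k
    have h1 : (lam k ^ d)⁻¹ ≤ ((grid n l τ (k + 1) \ grid n l τ k).card : ℝ) := by
      have h2 : (2 : ℝ) ^ (n * (k + 1)) ≤ ((grid n l τ (k + 1) \ grid n l τ k).card : ℝ) := by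
        exact_mod_cast P.two_pow_le_card_sdiff hn k
      refine le_trans (le_of_eq ?_) h2
      rw [hd, mul_comm (n : ℝ), Real.rpow_mul_natCast (hlam0 k).le, hlam, P.pow_rpow, ← pow_mul,
        mul_comm n, one_div, inv_pow, inv_inv]
    have h3 : √(s k * (g / 4 * lam k)) ^ β
        = lam k ^ (d / 2) * ((g / 4) ^ (β / 2) * lam k ^ (β / 2)) := by
      have hpos := hlam0 k
      rw [Real.sqrt_eq_rpow, ← Real.rpow_mul (by have := hs0 k; positivity),
        show 1 / 2 * β = β / 2 by ring,
        Real.mul_rpow (hs0 k).le (by positivity), Real.mul_rpow (by positivity) hpos.le, hsdef]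
      dsimp only
      rw [← Real.rpow_mul hpos.le]
      congr 2
      field_simp
    calc X k = (lam k ^ d)⁻¹ * (lam k ^ (d / 2) * ((g / 4) ^ (β / 2) * lam k ^ (β / 2))) := by
          have hpos := hlam0 k
          have e : (lam k)⁻¹ ^ ((d - β) / 2) = lam k ^ (-d) * lam k ^ (d / 2) * lam k ^ (β / 2) := by
            rw [Real.inv_rpow hpos.le, ← Real.rpow_neg hpos.le, ← Real.rpow_add hpos,
              ← Real.rpow_add hpos]
            congr 1
            ring
          simp only [hX]
          rw [e, Real.rpow_neg hpos.le]
          ring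
      _ ≤ _ := by
          rw [h3]
          have hpos := hlam0 k
          gcongr
  set D : ℝ≥0∞ := V * V with hD
  have hD0 : D ≠ 0 := (ENNReal.mul_pos hV0.ne' hV0.ne').ne'
  set Y : ℕ → ℝ≥0∞ := fun k => (ENNReal.ofReal (2 ^ (2 * α - (n : ℝ))) *
    (ENNReal.ofReal (c * X k) * D)) ^ (1 / 2 : ℝ) with hY
  have hYlim : Tendsto Y atTop (nhds ⊤) := by
    have h1 : Tendsto (fun k => ENNReal.ofReal (c * X k)) atTop (nhds ⊤) :=
      ENNReal.tendsto_ofReal_atTop.comp (hXlim.const_mul_atTop hc0)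
    have h2 := ENNReal.Tendsto.mul_const (b := D) h1 (Or.inl ENNReal.top_ne_zero)
    rw [ENNReal.top_mul hD0] at h2
    have h3 := ENNReal.Tendsto.const_mul (a := ENNReal.ofReal (2 ^ (2 * α - (n : ℝ)))) h2
      (Or.inl ENNReal.top_ne_zero)
    rw [ENNReal.mul_top (ENNReal.ofReal_pos.2 (by positivity)).ne'] at h3
    have h4 := (ENNReal.continuous_rpow_const (y := (1 / 2 : ℝ))).tendsto ⊤ |>.comp h3
    rwa [ENNReal.top_rpow_of_pos (by norm_num)] at h4
  have hfin : ENNReal.ofReal C * M < ⊤ := ENNReal.mul_lt_top ENNReal.ofReal_lt_top hMtop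
  obtain ⟨k, hk1, hk2⟩ := (hsmall.and (hYlim.eventually (lt_mem_nhds hfin))).exists
  refine ⟨tent (grid n l τ (k + 1)) (s k), ⟨?_, (hupper k).trans_lt hMtop⟩, ?_, ?_⟩
  · have := continuous_tent (grid n l τ (k + 1)) (s k)
    exact Continuous.locallyIntegrable (by fun_prop)
  · have hlam1 : lam k ≤ 1 := pow_le_one₀ hl.le (by linarith)
    have := hlam0 k
    have hgl : 0 < g * lam k := by positivity
    have hs1 : s k ≤ 1 := by
      apply Real.rpow_le_one this.le hlam1
      have : 0 ≤ d := by linarith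
      positivity
    exact P.Qnorm_tent_pos hn hα0 (hs0 k) hs1 (by linarith)
  · calc _ ≤ ENNReal.ofReal C * M := by gcongr; exact hupper k
      _ < Y k := hk2
      _ ≤ (ENNReal.ofReal (2 ^ (2 * α - (n : ℝ))) *
          energy α (tent (grid n l τ (k + 1)) (s k) ∘ (family n P hτ1).map) (ball 0 2))
            ^ (1 / 2 : ℝ) := by
          simp only [hY]
          gcongr
          refine le_trans ?_ (P.energy_comp_ge hn hτ hτ1 hα0 (hs0 k) rfl hk1)
          gcongr
          exact hcardX k
      _ ≤ _ := le_Qnorm _ _ two_pos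

end Par

/-- Theorem 1.5: for `n ≥ 2` and `α₀ ∈ (0,1)` there exist a bounded set `E`
with `dim_L E = n - 2α₀` and a Lipschitz quasisymmetric homeomorphism `f` of `ℝⁿ` with
`J_f ∈ A₁(ℝⁿ; closure E)`, such that `u ↦ u ∘ f` is unbounded on `Q_α(ℝⁿ)` for every
`α ∈ (α₀, 1)`. -/
theorem exists_bounded_counterexample (n : ℕ) (hn : 2 ≤ n) (α₀ : ℝ)
    (hα₀ : α₀ ∈ Ioo (0:ℝ) 1) :
    ∃ E : Set (Pt n), Bornology.IsBounded E ∧ dimLoc E = (n : ℝ) - 2 * α₀ ∧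
      ∃ f : Pt n ≃ₜ Pt n,
        (∃ K : ℝ≥0, LipschitzWith K (⇑f)) ∧
        (∃ η : ℝ≥0 ≃o ℝ≥0, IsQS (⇑f) η) ∧
        ∃ Jf : Pt n → ℝ, JacobianCOV (⇑f) Jf ∧ MemA1 Jf (closure E) ∧
          ∀ α ∈ Ioo α₀ (1:ℝ), ∀ C > (0:ℝ), ∃ u : Pt n → ℝ, MemQ α u ∧
            0 < Qnorm α u ∧
            ENNReal.ofReal C * Qnorm α u < Qnorm α (u ∘ ⇑f) := by
  have hn0 : n ≠ 0 := by omega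
  have hn2 : (2 : ℝ) ≤ n := by exact_mod_cast hn
  obtain ⟨ha0, ha1⟩ := hα₀
  -- the contraction ratio `l` is chosen so that the Cantor dust has dimension `n σ = n - 2α₀`
  set σ : ℝ := (n - 2 * α₀) / n with hσ
  have hσ0 : 0 < σ := div_pos (by linarith) (by linarith)
  have hσ1 : σ < 1 := (div_lt_one (by linarith)).2 (by linarith)
  have hnσ : n * σ = n - 2 * α₀ := by
    rw [hσ]; field_simp
  set l : ℝ := (1 / 2) ^ (1 / σ) with hl
  set τ : ℝ := 1 / (2 * n) with hτ
  have P : Par l τ σ :=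
    { l0 := by positivity
      l1 := by
        have := Real.rpow_lt_rpow_of_exponent_gt (x := (1 / 2 : ℝ)) (by norm_num) (by norm_num)
          ((one_lt_div hσ0).2 hσ1)
        rwa [Real.rpow_one] at this
      t0 := by positivity
      s0 := hσ0
      hs := by
        rw [hl, ← Real.rpow_mul (by norm_num), one_div_mul_cancel hσ0.ne', Real.rpow_one] }
  have hτn : τ * (2 * n) ≤ 1 := by
    rw [hτ, one_div_mul_cancel (by positivity)]
  have hτ1 : τ ≤ 1 := by
    rw [hτ, div_le_one (by positivity)]
    linarith
  refine ⟨gridSet n l τ, ?_, (P.dimLoc_gridSet hτn).trans hnσ, (P.family n hτ1).homeo,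
    ⟨2, (P.family n hτ1).map_lipschitz⟩, ⟨etaIso, (P.family n hτ1).map_isQS⟩, _,
    jacobianCOV_of_lipschitz _ (P.family n hτ1).map_lipschitz,
    (P.family n hτ1).map_memA1 hn0 subset_closure, ?_⟩
  · refine isBounded_iff_forall_norm_le.2 ⟨1 / 2, ?_⟩
    rintro p ⟨k, hp⟩
    exact P.grid_norm hτn hp
  · rintro α ⟨hα0, hα1⟩ C _
    exact P.unbounded hn0 hτn hτ1 (by linarith) hα1 (by linarith) (by linarith) C

end
end
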